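/- arXiv:1510.06181 — 2 statements merged into one kernel-verified Lean document; each statement's English description precedes it below -/
import Mathlib

section
/- Let R be an integral domain with fraction field K and let A be a finite flat R-algebra whose generic fiber A^K = K ⊗_R A is block-split (e.g., A^K splits). Let p ∈ Spec(R) and suppose that the local ring R_p is unibranch, i.e., the integral closure of R_p in K is a local ring (this holds in particular if R_p is normal). Then the quotient morphism A_p → A(p) = A_p/p_pA_p is block bijective. -/
open TensorProduct

section BlockDefs
variable {B : Type*} [Ring B]

/-- `e` is a centrally-primitive ("block") idempotent of the ring `B`: a nonzero central
idempotent which is not the sum of two nonzero orthogonal central idempotents. -/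
def IsBlockIdem (e : B) : Prop :=
  IsIdempotentElem e ∧ e ≠ 0 ∧ (∀ x : B, e * x = x * e) ∧
    ∀ f g : B, (∀ x : B, f * x = x * f) → (∀ x : B, g * x = x * g) →
      IsIdempotentElem f → IsIdempotentElem g → f * g = 0 → f + g = e → f = 0 ∨ g = 0

end BlockDefs

/-- The number of centrally-primitive idempotents of a ring. -/
noncomputable def numBlocks (B : Type*) [Ring B] : ℕ := Nat.card {e : B // IsBlockIdem e}

/-- A map of rings is block bijective if it restricts to a bijection between the sets of
centrally-primitive idempotents. -/
def BlockBijective {B C : Type*} [Ring B] [Ring C] (φ : B → C) : Prop :=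
  Set.BijOn φ {e | IsBlockIdem e} {e | IsBlockIdem e}

/-- A finite-dimensional algebra `B` over a field `K` is block-split if the number of its
blocks is unchanged under arbitrary field extensions `L/K`. -/
def IsBlockSplit (K : Type u) (B : Type v) [Field K] [Ring B] [Algebra K B] : Prop :=
  ∀ (L : Type u) [Field L] [Algebra K L], numBlocks B = numBlocks (L ⊗[K] B)

/-!
Let `S = Rₚ`, let `D` be its integral closure in `K`, a local ring by unibranchness, and let `V` be
the localization, at a maximal ideal, of the integral closure of `D` in an algebraic closure `L`
of `K`. Put `B = S ⊗ A`, a finite free `S`-algebra. Blocks are the atoms among the central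
idempotents, so it suffices that reduction is bijective on central idempotents. Injectivity is
Nakayama's lemma.

For surjectivity, monic polynomials split over `V`, so a central idempotent of the special fiber
lifts to `V ⊗ B`. A finite-dimensional algebra with `n` blocks has `2 ^ n` central idempotents, so
block-splitness forces the lift to be defined over `K`. Since `K ∩ V = D`, it is defined over `D`.
Its coordinates generate a finite local `S`-algebra `T`. By uniqueness of lifts, over `T / m_S T`
the lift is of the form `1 ⊗ x` with `x ∈ B`, so `S → T / m_S T` is surjective and `T = S` by
Nakayama's lemma.
-/

/-- A central idempotent of a ring; the blocks of the ring are the minimal nonzero ones. -/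
def IsCentralIdem {B : Type*} [Ring B] (e : B) : Prop :=
  IsIdempotentElem e ∧ ∀ x, Commute e x

namespace IsCentralIdem

variable {B C : Type*} [Ring B] [Ring C] {e f : B}

theorem zero : IsCentralIdem (0 : B) :=
  ⟨.zero, Commute.zero_left⟩

theorem mul (he : IsCentralIdem e) (hf : IsCentralIdem f) : IsCentralIdem (e * f) :=
  ⟨he.1.mul_of_commute (he.2 f) hf.1, fun x ↦ (he.2 x).mul_left (hf.2 x)⟩

theorem one_sub (he : IsCentralIdem e) : IsCentralIdem (1 - e) :=
  ⟨he.1.one_sub, fun x ↦ (Commute.one_left x).sub_left (he.2 x)⟩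

theorem add (he : IsCentralIdem e) (hf : IsCentralIdem f) (hef : e * f = 0) :
    IsCentralIdem (e + f) := by
  refine ⟨?_, fun x ↦ (he.2 x).add_left (hf.2 x)⟩
  have hfe : f * e = 0 := (he.2 f).eq ▸ hef
  simp only [IsIdempotentElem, mul_add, add_mul, he.1.eq, hf.1.eq, hef, hfe, add_zero, zero_add]

theorem map_of_surjective (he : IsCentralIdem e) {φ : B →+* C} (hφ : Function.Surjective φ) :
    IsCentralIdem (φ e) :=
  ⟨he.1.map φ, hφ.forall.2 fun x ↦ (he.2 x).map φ⟩

theorem of_map_injective {φ : B →+* C} (hφ : Function.Injective φ) (he : IsCentralIdem (φ e)) :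
    IsCentralIdem e :=
  ⟨hφ (by rw [map_mul, he.1.eq]), fun x ↦ hφ (by rw [map_mul, map_mul, he.2])⟩

end IsCentralIdem

section Blocks

variable {B C : Type*} [Ring B] [Ring C]

theorem isBlockIdem_iff {e : B} :
    IsBlockIdem e ↔ IsCentralIdem e ∧ e ≠ 0 ∧ ∀ f g : B, IsCentralIdem f → IsCentralIdem g →
      f * g = 0 → f + g = e → f = 0 ∨ g = 0 :=
  ⟨fun ⟨hi, h0, hc, h⟩ ↦ ⟨⟨hi, hc⟩, h0, fun f g hf hg ↦ h f g hf.2 hg.2 hf.1 hg.1⟩,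
    fun ⟨he, h0, h⟩ ↦ ⟨he.1, h0, he.2, fun f g hf hg hfi hgi ↦ h f g ⟨hfi, hf⟩ ⟨hgi, hg⟩⟩⟩

theorem IsBlockIdem.isCentralIdem {e : B} (he : IsBlockIdem e) : IsCentralIdem e :=
  (isBlockIdem_iff.1 he).1

theorem isBlockIdem_map_iff {φ : B →+* C} (hφ : Function.Surjective φ)
    (hbij : Set.BijOn φ {e | IsCentralIdem e} {e | IsCentralIdem e}) {e : B}
    (he : IsCentralIdem e) : IsBlockIdem (φ e) ↔ IsBlockIdem e := by
  have map_eq_zero {f : B} (hf : IsCentralIdem f) : φ f = 0 ↔ f = 0 := by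
    rw [← map_zero φ]
    exact hbij.injOn.eq_iff hf .zero
  rw [isBlockIdem_iff, isBlockIdem_iff, Ne, map_eq_zero he]
  refine and_congr (iff_of_true (he.map_of_surjective hφ) he) (and_congr_right fun _ ↦ ?_)
  constructor <;> intro h f g hf hg hfg hsum
  · rw [← map_eq_zero hf, ← map_eq_zero hg]
    exact h _ _ (hf.map_of_surjective hφ) (hg.map_of_surjective hφ)
      (by rw [← map_mul, hfg, map_zero]) (by rw [← map_add, hsum])
  · obtain ⟨f', hf', rfl⟩ := hbij.surjOn hf
    obtain ⟨g', hg', rfl⟩ := hbij.surjOn hg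
    have hfg' : f' * g' = 0 := (map_eq_zero (hf'.mul hg')).1 (by rw [map_mul, hfg])
    have hsum' : f' + g' = e := hbij.injOn (hf'.add hg' hfg') he (by rw [map_add, hsum])
    rw [map_eq_zero hf', map_eq_zero hg']
    exact h f' g' hf' hg' hfg' hsum'

theorem blockBijective_of_bijOn {φ : B →+* C} (hφ : Function.Surjective φ)
    (hbij : Set.BijOn φ {e | IsCentralIdem e} {e | IsCentralIdem e}) : BlockBijective φ := by
  refine ⟨fun e he ↦ (isBlockIdem_map_iff hφ hbij he.isCentralIdem).2 he,
    hbij.injOn.mono fun e he ↦ he.isCentralIdem, fun c hc ↦ ?_⟩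
  obtain ⟨e, he, rfl⟩ := hbij.surjOn hc.isCentralIdem
  exact ⟨e, (isBlockIdem_map_iff hφ hbij he).1 hc, rfl⟩

theorem bijOn_isCentralIdem (Φ : B ≃+* C) :
    Set.BijOn Φ {e | IsCentralIdem e} {e | IsCentralIdem e} :=
  ⟨fun _ he ↦ he.map_of_surjective (φ := (Φ : B →+* C)) Φ.surjective, Φ.injective.injOn,
    fun c hc ↦ ⟨Φ.symm c, hc.map_of_surjective (φ := (Φ.symm : C →+* B)) Φ.symm.surjective,
      Φ.apply_symm_apply c⟩⟩

variable (B) in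
/-- The central idempotents of a ring are the idempotents of its center, which Mathlib equips
with the structure of a Boolean algebra. -/
def idemCenterEquiv :
    {a : Subring.center B // IsIdempotentElem a} ≃ {e : B // IsCentralIdem e} where
  toFun a := ⟨a.1.1, congrArg Subtype.val a.2, fun x ↦ (Subring.mem_center_iff.1 a.1.2 x).symm⟩
  invFun e := ⟨⟨e.1, Subring.mem_center_iff.2 fun x ↦ (e.2.2 x).symm⟩, Subtype.ext e.2.1⟩

theorem idemCenterEquiv_eq_zero_iff {a : {a : Subring.center B // IsIdempotentElem a}} :
    (idemCenterEquiv B a : B) = 0 ↔ a = ⊥ :=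
  ⟨fun h ↦ Subtype.ext (Subtype.ext h), fun h ↦ congrArg (fun z ↦ (z.1 : B)) h⟩

theorem le_iff_idemCenterEquiv_mul {a b : {a : Subring.center B // IsIdempotentElem a}} :
    a ≤ b ↔ (idemCenterEquiv B a * idemCenterEquiv B b : B) = idemCenterEquiv B a :=
  ⟨fun h ↦ congrArg Subtype.val (show a.1 * b.1 = a.1 from h), fun h ↦ Subtype.ext h⟩

theorem isBlockIdem_idemCenterEquiv_iff {a : {a : Subring.center B // IsIdempotentElem a}} :
    IsBlockIdem (idemCenterEquiv B a : B) ↔ IsAtom a := by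
  have ha := (idemCenterEquiv B a).2
  rw [isBlockIdem_iff, IsAtom, and_iff_right ha, Ne, idemCenterEquiv_eq_zero_iff]
  refine and_congr_right fun _ ↦ ⟨fun h b hb ↦ ?_, fun h f g hf _ hfg hsum ↦ ?_⟩
  · have hb' := (idemCenterEquiv B b).2
    have hba := le_iff_idemCenterEquiv_mul.1 hb.le
    have hsub : (idemCenterEquiv B a * (1 - idemCenterEquiv B b) : B) =
        idemCenterEquiv B a - idemCenterEquiv B b := by
      rw [mul_sub, mul_one, (ha.2 _).eq, hba]
    rcases h _ _ hb' (ha.mul hb'.one_sub)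
        (by rw [hsub, mul_sub, hba, hb'.1.eq, sub_self]) (by rw [hsub, add_sub_cancel])
      with h0 | h0
    · exact idemCenterEquiv_eq_zero_iff.1 h0
    · rw [hsub, sub_eq_zero] at h0
      exact absurd ((idemCenterEquiv B).injective (Subtype.ext h0.symm)) hb.ne
  · obtain ⟨b, hb⟩ := (idemCenterEquiv B).surjective ⟨f, hf⟩
    obtain rfl : (idemCenterEquiv B b : B) = f := congrArg Subtype.val hb
    have hle : b ≤ a :=
      le_iff_idemCenterEquiv_mul.2 (by rw [← hsum, mul_add, hf.1.eq, hfg, add_zero])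
    rcases hle.lt_or_eq with hlt | rfl
    · exact .inl (idemCenterEquiv_eq_zero_iff.2 (h b hlt))
    · exact .inr (add_eq_left.1 hsum)

theorem card_isCentralIdem [Finite {e : B // IsCentralIdem e}] :
    Nat.card {e : B // IsCentralIdem e} = 2 ^ numBlocks B := by
  let I := {a : Subring.center B // IsIdempotentElem a}
  have : Finite I := .of_equiv _ (idemCenterEquiv B).symm
  let _ : Fintype I := .ofFinite I
  let _ : CompleteAtomicBooleanAlgebra I := Fintype.toCompleteAtomicBooleanAlgebra I
  have blocksEquiv : {a : I // IsAtom a} ≃ {e : B // IsBlockIdem e} :=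
    ((idemCenterEquiv B).subtypeEquiv fun a ↦ isBlockIdem_idemCenterEquiv_iff.symm).trans
      (Equiv.subtypeSubtypeEquivSubtype IsBlockIdem.isCentralIdem)
  classical
  rw [← Nat.card_congr (idemCenterEquiv B), numBlocks, ← Nat.card_congr blocksEquiv,
    Nat.card_congr CompleteAtomicBooleanAlgebra.toSetOfIsAtom.toEquiv,
    Nat.card_eq_fintype_card, Nat.card_eq_fintype_card, Fintype.card_set]

theorem finite_isCentralIdem (K : Type*) [Field K] [Algebra K B] [Module.Finite K B] :
    Finite {e : B // IsCentralIdem e} := by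
  have : IsArtinianRing (Subring.center B) := IsArtinianRing.of_finite K (Subalgebra.center K B)
  have : Finite (TopologicalSpace.Clopens (PrimeSpectrum (Subring.center B))) :=
    .of_injective SetLike.coe SetLike.coe_injective
  have : Finite {a : Subring.center B // IsIdempotentElem a} :=
    .of_equiv _ PrimeSpectrum.isIdempotentElemEquivClopens.symm.toEquiv
  exact .of_equiv _ (idemCenterEquiv B)

end Blocks

section Nakayama

variable {X M C C' : Type*} [CommRing X] [AddCommGroup M] [Module X M]
  [Ring C] [Algebra X C] [Module.Finite X C] [Ring C']

theorem eq_zero_of_isIdempotentElem_of_mem_jacobson_smul [Module.Finite X M] {P : Module.End X M}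
    (hP : IsIdempotentElem P) (h : ∀ y, P y ∈ (Ideal.jacobson ⊥ : Ideal X) • (⊤ : Submodule X M)) :
    P = 0 := by
  rw [← LinearMap.range_eq_bot]
  refine Submodule.eq_bot_of_le_smul_of_le_jacobson_bot _ _ (Module.Finite.iff_fg.1 inferInstance)
    ?_ le_rfl
  rintro _ ⟨y, rfl⟩
  have := Submodule.mem_map_of_mem (f := P) (h y)
  rwa [Submodule.map_smul'', Submodule.map_top, ← Module.End.mul_apply, hP.eq] at this

theorem IsCentralIdem.eq_zero_of_mem_jacobson_smul {e : C} (he : IsCentralIdem e)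
    (h : e ∈ (Ideal.jacobson ⊥ : Ideal X) • (⊤ : Submodule X C)) : e = 0 := by
  suffices LinearMap.mulLeft X e = 0 by simpa using congr($this 1)
  refine eq_zero_of_isIdempotentElem_of_mem_jacobson_smul ?_ fun y ↦ ?_
  · exact LinearMap.ext fun y ↦ by simp [← mul_assoc, he.1.eq]
  · have := Submodule.mem_map_of_mem (f := LinearMap.mulRight X y) h
    rw [Submodule.map_smul''] at this
    exact Submodule.smul_mono le_rfl le_top this

variable {φ : C →+* C'}

theorem injOn_isCentralIdem_of_ker_le_jacobson
    (hφ : ∀ y, φ y = 0 → y ∈ (Ideal.jacobson ⊥ : Ideal X) • (⊤ : Submodule X C)) :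
    Set.InjOn φ {e | IsCentralIdem e} := by
  have mul_one_sub_eq_zero {e f : C} (he : IsCentralIdem e) (hf : IsCentralIdem f)
      (hef : φ e = φ f) : e * (1 - f) = 0 := by
    refine (he.mul hf.one_sub).eq_zero_of_mem_jacobson_smul (hφ _ ?_)
    rw [map_mul, hef, ← map_mul, hf.1.mul_one_sub_self, map_zero]
  intro e he f hf hef
  have h₁ := mul_one_sub_eq_zero he hf hef
  have h₂ := mul_one_sub_eq_zero hf he hef.symm
  rw [mul_sub, mul_one, sub_eq_zero] at h₁ h₂
  rw [h₁, (he.2 f).eq, ← h₂]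

theorem mul_mul_eq_zero_of_ker_le_jacobson
    (hφ : ∀ y, φ y = 0 → y ∈ (Ideal.jacobson ⊥ : Ideal X) • (⊤ : Submodule X C))
    {e f : C} (he : IsIdempotentElem e) (hf : IsIdempotentElem f)
    (hcomm : ∀ y, Commute (φ e) (φ y)) (hef : e * f = 0) (y : C) : e * y * f = 0 := by
  suffices LinearMap.mulLeft X e ∘ₗ LinearMap.mulRight X f = 0 by
    simpa [mul_assoc] using congr($this y)
  refine eq_zero_of_isIdempotentElem_of_mem_jacobson_smul ?_ fun y ↦ hφ _ ?_
  · refine LinearMap.ext fun y ↦ ?_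
    simp only [Module.End.mul_apply, LinearMap.comp_apply, LinearMap.mulLeft_apply,
      LinearMap.mulRight_apply, mul_assoc, hf.eq]
    rw [← mul_assoc e e, he.eq]
  · rw [LinearMap.comp_apply, LinearMap.mulLeft_apply, LinearMap.mulRight_apply, map_mul,
      map_mul, ← mul_assoc, (hcomm y).eq, mul_assoc, ← map_mul, hef, map_zero, mul_zero]

theorem isCentralIdem_of_ker_le_jacobson
    (hφ : ∀ y, φ y = 0 → y ∈ (Ideal.jacobson ⊥ : Ideal X) • (⊤ : Submodule X C))
    {e : C} (he : IsIdempotentElem e) (hcomm : ∀ y, Commute (φ e) (φ y)) : IsCentralIdem e := by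
  refine ⟨he, fun y ↦ ?_⟩
  have h₁ := mul_mul_eq_zero_of_ker_le_jacobson hφ he he.one_sub hcomm he.mul_one_sub_self y
  have h₂ := mul_mul_eq_zero_of_ker_le_jacobson hφ he.one_sub he
    (fun y ↦ by simpa using (Commute.one_left (φ y)).sub_left (hcomm y)) he.one_sub_mul_self y
  rw [mul_sub, mul_one, sub_eq_zero] at h₁
  rw [sub_mul, one_mul, sub_mul, sub_eq_zero] at h₂
  exact h₁.trans h₂.symm

end Nakayama

section Lifting

open Polynomial

theorem isCoprime_prod_X_sub_C {V : Type*} [CommRing V] {s t : Multiset V}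
    (h : ∀ a ∈ s, ∀ b ∈ t, IsUnit (a - b)) :
    IsCoprime (s.map (X - C ·)).prod (t.map (X - C ·)).prod := by
  refine Multiset.prod_induction (IsCoprime · _) _ (fun _ _ ↦ .mul_left) isCoprime_one_left ?_
  simp only [Multiset.mem_map, forall_exists_index, and_imp, forall_apply_eq_imp_iff₂]
  refine fun a ha ↦ Multiset.prod_induction (IsCoprime _) _ (fun _ _ ↦ .mul_right)
    isCoprime_one_right ?_
  simp only [Multiset.mem_map, forall_exists_index, and_imp, forall_apply_eq_imp_iff₂]
  exact fun b hb ↦ isCoprime_X_sub_C_of_isUnit_sub (h a ha b hb)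

variable {V : Type*} [CommRing V] [IsLocalRing V]

theorem isUnit_sub_of_sub_one_mem_maximalIdeal {a b : V}
    (ha : a - 1 ∈ IsLocalRing.maximalIdeal V) (hb : b - 1 ∉ IsLocalRing.maximalIdeal V) :
    IsUnit (a - b) := by
  rw [← IsLocalRing.notMem_maximalIdeal]
  intro hab
  exact hb (by simpa using sub_mem ha hab)

-- Group the roots of `f` according to whether they reduce to `1`; a Bézout relation between the
-- two factors yields `p`, the polynomial analogue of a characteristic function.
theorem exists_dvd_mul_one_sub_of_splits {f : V[X]} (hf : f.Monic) (hsplit : f.Splits) :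
    ∃ p : V[X], X ∣ p ∧ X - 1 ∣ 1 - p ∧ f ∣ p * (1 - p) := by
  classical
  obtain ⟨s, hs⟩ := splits_iff_exists_multiset.1 hsplit
  let m := IsLocalRing.maximalIdeal V
  let s₀ := 0 ::ₘ s.filter (¬ · - 1 ∈ m)
  let s₁ := 1 ::ₘ s.filter (· - 1 ∈ m)
  have hs₀ : ∀ b ∈ s₀, b - 1 ∉ m := by
    intro b hb
    rcases Multiset.mem_cons.1 hb with rfl | hb
    · simp [m]
    · exact (Multiset.mem_filter.1 hb).2
  have hs₁ : ∀ a ∈ s₁, a - 1 ∈ m := by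
    intro a ha
    rcases Multiset.mem_cons.1 ha with rfl | ha
    · simp
    · exact (Multiset.mem_filter.1 ha).2
  obtain ⟨u, v, huv⟩ : IsCoprime (s₁.map (X - C ·)).prod (s₀.map (X - C ·)).prod :=
    isCoprime_prod_X_sub_C fun a ha b hb ↦
      isUnit_sub_of_sub_one_mem_maximalIdeal (hs₁ a ha) (hs₀ b hb)
  have hle : s ≤ s₀ + s₁ := by
    conv_lhs => rw [← Multiset.filter_add_not (· - 1 ∈ m) s, add_comm]
    exact add_le_add (Multiset.le_cons_self _ _) (Multiset.le_cons_self _ _)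
  rw [← eq_sub_iff_add_eq] at huv
  refine ⟨v * (s₀.map (X - C ·)).prod, ?_, ?_, ?_⟩
  · exact .mul_left (by simp [s₀]) v
  · exact huv ▸ .mul_left (by simp [s₁]) u
  · rw [hs, hf.leadingCoeff, C_1, one_mul, ← huv, mul_mul_mul_comm, ← Multiset.prod_add,
      ← Multiset.map_add]
    exact .mul_left (Multiset.prod_dvd_prod_of_le (Multiset.map_le_map hle)) _

theorem surjOn_isCentralIdem_of_monic_splits (hV : ∀ f : V[X], f.Monic → f.Splits)
    {C C' : Type*} [Ring C] [Algebra V C] [Module.Finite V C] [Ring C'] {φ : C →+* C'}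
    (hφ : Function.Surjective φ)
    (hker : ∀ y, φ y = 0 → y ∈ (Ideal.jacobson ⊥ : Ideal V) • (⊤ : Submodule V C)) :
    Set.SurjOn φ {e | IsCentralIdem e} {e | IsCentralIdem e} := by
  intro c hc
  obtain ⟨x, rfl⟩ := hφ c
  obtain ⟨f, hf, hfx⟩ := Algebra.IsIntegral.isIntegral (R := V) x
  obtain ⟨p, ⟨q₀, hq₀⟩, ⟨q₁, hq₁⟩, ⟨r, hr⟩⟩ := exists_dvd_mul_one_sub_of_splits hf (hV f hf)
  let e := aeval x p
  have he : IsIdempotentElem e := by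
    have : aeval x (p * (1 - p)) = 0 := by
      rw [hr, map_mul, aeval_def, hfx, zero_mul]
    rw [map_mul, map_sub, map_one, mul_one_sub, sub_eq_zero] at this
    exact this.symm
  have hφe : φ e = φ x := by
    have h₀ : φ x * φ e = φ e := by
      simp only [e, hq₀, map_mul, aeval_X, ← mul_assoc, hc.1.eq]
    have h₁ : φ x * (1 - φ e) = 0 := by
      have : 1 - e = (x - 1) * aeval x q₁ := by simpa [e] using congr(aeval x $hq₁)
      rw [← map_one φ, ← map_sub, this, map_mul, ← mul_assoc, map_sub, mul_sub, hc.1.eq, map_one,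
        mul_one, sub_self, zero_mul]
    rw [← h₀, eq_comm, ← sub_eq_zero, ← mul_one_sub, h₁]
  exact ⟨e, isCentralIdem_of_ker_le_jacobson hker he fun y ↦ hφe ▸ hc.2 _, hφe⟩

theorem splits_of_monic_of_isIntegrallyClosedIn {V L : Type*} [CommRing V] [Field L]
    [IsAlgClosed L] [Algebra V L] [IsIntegrallyClosedIn V L] {f : V[X]} (hf : f.Monic) :
    f.Splits := by
  refine .of_splits_map_of_injective (i := algebraMap V L)
    (IsIntegralClosure.algebraMap_injective V V L) (IsAlgClosed.splits _) fun a ha ↦ ?_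
  refine IsIntegrallyClosedIn.isIntegral_iff.1 ⟨f, hf, ?_⟩
  rw [← eval_map]
  exact isRoot_of_mem_roots ha

end Lifting

section IntegralClosure

open Polynomial

variable {D : Type*} [CommRing D] [IsLocalRing D]

theorem exists_isUnit_coeff_of_aeval_eq_zero {T : Type*} [CommRing T] [Algebra D T] {n : Ideal T}
    [n.IsPrime] (hn : IsLocalRing.maximalIdeal D ≤ n.comap (algebraMap D T)) {b : T} (hb : b ∉ n)
    {g : D[X]} (hg : g.Monic) (hgb : aeval b g = 0) : ∃ i < g.natDegree, IsUnit (g.coeff i) := by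
  by_contra! hcoeff
  refine hb (Ideal.IsPrime.mem_of_pow_mem ‹_› g.natDegree ?_)
  rw [aeval_eq_sum_range, Finset.sum_range_succ, hg.coeff_natDegree, one_smul] at hgb
  rw [← neg_eq_of_add_eq_zero_right hgb]
  refine neg_mem (sum_mem fun i hi ↦ ?_)
  rw [Algebra.smul_def]
  exact n.mul_mem_right _ (hn (hcoeff i (Finset.mem_range.1 hi)))

variable [IsDomain D] [IsIntegrallyClosed D] {K L : Type*} [Field K] [Algebra D K]
  [IsFractionRing D K] [Field L] [Algebra K L] [Algebra D L] [IsScalarTower D K L]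

-- Comparing the minimal polynomials of `b` and `c • b` shows that some power of `c` lies in `D`.
theorem mem_range_algebraMap_of_isIntegral_smul {n : Ideal (integralClosure D L)} [n.IsMaximal]
    {b : integralClosure D L} (hb : b ∉ n) {c : K} (hcb : IsIntegral D (c • (b : L))) :
    c ∈ (algebraMap D K).range := by
  rcases eq_or_ne c 0 with rfl | hc
  · exact zero_mem _
  have hbint : IsIntegral D (b : L) := b.2
  have hn : IsLocalRing.maximalIdeal D ≤ n.comap (algebraMap D (integralClosure D L)) :=
    (IsLocalRing.eq_maximalIdeal (Ideal.isMaximal_comap_of_isIntegral_of_isMaximal n)).ge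
  obtain ⟨i, hi, u, hu⟩ := exists_isUnit_coeff_of_aeval_eq_zero hn hb (minpoly.monic hbint)
    (Subtype.ext (by rw [aeval_subalgebra_coe, minpoly.aeval, ZeroMemClass.coe_zero]))
  have hminpoly : (minpoly D (c • (b : L))).map (algebraMap D K) =
      ((minpoly D (b : L)).map (algebraMap D K)).scaleRoots c := by
    rw [← minpoly.isIntegrallyClosed_eq_field_fractions' K hcb,
      ← minpoly.isIntegrallyClosed_eq_field_fractions' K hbint,
      IsIntegrallyClosed.minpoly_smul hc hbint.tower_top]
  have hcoeff := congr(coeff $hminpoly i)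
  rw [coeff_scaleRoots, coeff_map, coeff_map,
    natDegree_map_eq_of_injective (IsFractionRing.injective D K), ← hu] at hcoeff
  refine IsIntegrallyClosed.exists_algebraMap_eq_of_isIntegral_pow (Nat.sub_pos_of_lt hi) ?_
  have hpow : c ^ ((minpoly D (b : L)).natDegree - i) =
      algebraMap D K (↑u⁻¹ * (minpoly D (c • (b : L))).coeff i) := by
    rw [map_mul, hcoeff, ← mul_assoc, ← map_mul, Units.inv_mul, map_one, one_mul]
  exact hpow ▸ isIntegral_algebraMap

-- The ring `V` is the localization, at a maximal ideal, of the integral closure of `D` in `L`.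
variable (D K L) in
theorem exists_isLocalRing_isIntegrallyClosedIn_subalgebra [Algebra.IsAlgebraic K L] :
    ∃ V : Subalgebra D L, IsLocalRing V ∧ IsIntegrallyClosedIn V L ∧
      ∀ c : K, algebraMap K L c ∈ V → c ∈ (algebraMap D K).range := by
  obtain ⟨n, hn⟩ := Ideal.exists_maximal (integralClosure D L)
  have : Algebra.IsAlgebraic D L := (IsFractionRing.comap_isAlgebraic_iff (K := K)).2 inferInstance
  have : FaithfulSMul D L := (faithfulSMul_iff_algebraMap_injective D L).2 <| by
    rw [IsScalarTower.algebraMap_eq D K L]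
    exact (algebraMap K L).injective.comp (IsFractionRing.injective D K)
  have : IsFractionRing (integralClosure D L) L :=
    integralClosure.isFractionRing_of_algebraic
      ((injective_iff_map_eq_zero _).1 (FaithfulSMul.algebraMap_injective D L))
  have : IsIntegrallyClosed (integralClosure D L) :=
    (isIntegrallyClosed_iff_isIntegrallyClosedIn L).2 inferInstance
  let V := Localization.subalgebra.ofField L n.primeCompl n.primeCompl_le_nonZeroDivisors
  have hlocal : IsLocalRing V := IsLocalization.AtPrime.isLocalRing V n
  have : IsIntegrallyClosed V :=
    isIntegrallyClosed_of_isLocalization V n.primeCompl n.primeCompl_le_nonZeroDivisors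
  have hclosed : IsIntegrallyClosedIn V L :=
    (isIntegrallyClosed_iff_isIntegrallyClosedIn L).1 inferInstance
  refine ⟨V.restrictScalars D, hlocal, hclosed,
    fun c ⟨a, b, hb, hab⟩ ↦ mem_range_algebraMap_of_isIntegral_smul hb ?_⟩
  have hb0 : (b : L) ≠ 0 := fun h ↦ hb (by rw [show b = 0 from Subtype.ext h]; exact n.zero_mem)
  rw [Algebra.smul_def, hab]
  change IsIntegral D ((a : L) * (b : L)⁻¹ * b)
  rw [inv_mul_cancel_right₀ hb0]
  exact a.2

end IntegralClosure

section ScalarExtension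

variable {S X Y Z B : Type*} [CommRing S] [CommRing X] [Algebra S X] [CommRing Y] [Algebra S Y]
  [CommRing Z] [Algebra S Z] [Ring B] [Algebra S B]

variable (B) in
/-- The change of scalars `X ⊗[S] B → Y ⊗[S] B` along a homomorphism `φ : X → Y` of
commutative `S`-algebras. -/
noncomputable abbrev mapScalars (φ : X →ₐ[S] Y) : X ⊗[S] B →ₐ[S] Y ⊗[S] B :=
  Algebra.TensorProduct.map φ (AlgHom.id S B)

theorem mapScalars_one_tmul (φ : X →ₐ[S] Y) (x : B) : mapScalars B φ (1 ⊗ₜ x) = 1 ⊗ₜ x := by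
  rw [Algebra.TensorProduct.map_tmul, map_one, AlgHom.id_apply]

theorem mapScalars_mapScalars (ψ : Y →ₐ[S] Z) (φ : X →ₐ[S] Y) (y : X ⊗[S] B) :
    mapScalars B ψ (mapScalars B φ y) = mapScalars B (ψ.comp φ) y := by
  induction y with
  | zero => simp only [map_zero]
  | tmul x b => rfl
  | add y z hy hz => simp only [map_add, hy, hz]

theorem isCentralIdem_of_commute_one_tmul {e : X ⊗[S] B} (he : IsIdempotentElem e)
    (hcomm : ∀ b : B, Commute e (1 ⊗ₜ b)) : IsCentralIdem e := by
  refine ⟨he, fun y ↦ ?_⟩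
  induction y with
  | zero => exact .zero_right e
  | tmul x b =>
    rw [← mul_one x, ← smul_eq_mul, ← smul_tmul']
    exact (hcomm b).smul_right x
  | add y z hy hz => exact hy.add_right hz

theorem IsCentralIdem.mapScalars {e : X ⊗[S] B} (he : IsCentralIdem e) (φ : X →ₐ[S] Y) :
    IsCentralIdem (mapScalars B φ e) :=
  isCentralIdem_of_commute_one_tmul (he.1.map _) fun b ↦ by
    rw [← mapScalars_one_tmul φ b]
    exact (he.2 _).map _

theorem IsCentralIdem.one_tmul {e : B} (he : IsCentralIdem e) :
    IsCentralIdem ((1 : X) ⊗ₜ[S] e) :=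
  isCentralIdem_of_commute_one_tmul
    (he.1.map (Algebra.TensorProduct.includeRight : B →ₐ[S] X ⊗[S] B)) fun b ↦
    (he.2 b).map (Algebra.TensorProduct.includeRight : B →ₐ[S] X ⊗[S] B)

theorem exists_eq_one_tmul_of_numBlocks_eq {K L C : Type*} [Field K] [Field L] [Algebra K L]
    [Ring C] [Algebra K C] [Module.Finite K C] (h : numBlocks C = numBlocks (L ⊗[K] C))
    {e : L ⊗[K] C} (he : IsCentralIdem e) : ∃ c : C, e = 1 ⊗ₜ c := by
  have := finite_isCentralIdem (B := C) K
  have := finite_isCentralIdem (B := L ⊗[K] C) L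
  let ι : {c : C // IsCentralIdem c} → {e : L ⊗[K] C // IsCentralIdem e} :=
    fun c ↦ ⟨1 ⊗ₜ c.1, c.2.one_tmul⟩
  have hι : Function.Injective ι := fun c c' hcc' ↦ Subtype.ext <|
    Algebra.TensorProduct.includeRight_injective (algebraMap K L).injective
      (congrArg Subtype.val hcc')
  have hcard : Nat.card {c : C // IsCentralIdem c} =
      Nat.card {e : L ⊗[K] C // IsCentralIdem e} := by
    rw [card_isCentralIdem, card_isCentralIdem, h]
  obtain ⟨c, hc⟩ := ((Nat.bijective_iff_injective_and_card ι).2 ⟨hι, hcard⟩).2 ⟨e, he⟩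
  exact ⟨c, congrArg Subtype.val hc.symm⟩

section Coordinates

variable {ι : Type*} (b : Module.Basis ι S B)

theorem repr_mapScalars (φ : X →ₐ[S] Y) (y : X ⊗[S] B) (i : ι) :
    (b.baseChange Y).repr (mapScalars B φ y) i = φ ((b.baseChange X).repr y i) := by
  induction y with
  | zero => simp
  | tmul x c => simp [Algebra.smul_def]
  | add y z hy hz => simp only [map_add, Finsupp.add_apply, hy, hz]

theorem mem_range_mapScalars_iff [Finite ι] {φ : X →ₐ[S] Y} {y : Y ⊗[S] B} :
    y ∈ (mapScalars B φ).range ↔ ∀ i, (b.baseChange Y).repr y i ∈ φ.range := by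
  constructor
  · rintro ⟨z, rfl⟩ i
    exact ⟨_, (repr_mapScalars b φ z i).symm⟩
  · intro h
    choose x hx using h
    refine ⟨(b.baseChange X).repr.symm (Finsupp.equivFunOnFinite.symm x),
      (b.baseChange Y).repr.injective (Finsupp.ext fun i ↦ ?_)⟩
    exact (repr_mapScalars b φ _ i).trans (by simpa using hx i)

theorem exists_subalgebra_mapScalars_val_eq [Finite ι] (y : X ⊗[S] B) :
    ∃ (A : Subalgebra S X) (z : A ⊗[S] B), mapScalars B A.val z = y ∧
      Algebra.adjoin S (Set.range ((b.baseChange A).repr z)) = ⊤ := by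
  let A := Algebra.adjoin S (Set.range ((b.baseChange X).repr y))
  obtain ⟨z, hz : mapScalars B A.val z = y⟩ : y ∈ (mapScalars B A.val).range :=
    (mem_range_mapScalars_iff b).2 fun i ↦ ⟨⟨_, Algebra.subset_adjoin ⟨i, rfl⟩⟩, rfl⟩
  have hrepr : A.val ∘ (b.baseChange A).repr z = (b.baseChange X).repr y :=
    funext fun i ↦ by rw [Function.comp_apply, ← repr_mapScalars, hz]
  refine ⟨A, z, hz, Subalgebra.map_injective (f := A.val) Subtype.val_injective ?_⟩
  rw [AlgHom.map_adjoin, ← Set.range_comp, hrepr, Algebra.map_top, Subalgebra.range_val]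

end Coordinates

theorem mapScalars_injective [Module.Flat S B] {φ : X →ₐ[S] Y} (hφ : Function.Injective φ) :
    Function.Injective (mapScalars B φ) :=
  Module.Flat.rTensor_preserves_injective_linearMap φ.toLinearMap hφ

theorem mem_ker_smul_of_mapScalars_eq_zero [Module.Free S B] {φ : X →ₐ[S] Y} {y : X ⊗[S] B}
    (hy : mapScalars B φ y = 0) : y ∈ RingHom.ker φ • (⊤ : Submodule X (X ⊗[S] B)) := by
  let b := Module.Free.chooseBasis S B
  rw [← (b.baseChange X).linearCombination_repr y, Finsupp.linearCombination_apply]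
  refine Submodule.sum_mem _ fun i _ ↦ Submodule.smul_mem_smul ?_ trivial
  rw [RingHom.mem_ker, ← repr_mapScalars, hy, map_zero, Finsupp.zero_apply]

end ScalarExtension

section Reduction

open IsLocalRing

variable {S X Y B : Type*} [CommRing S] [CommRing X] [Algebra S X] [IsLocalRing X] [CommRing Y]
  [Algebra S Y] [IsLocalRing Y] [Ring B] [Algebra S B]

variable (X B) in
/-- The reduction `X ⊗[S] B → k ⊗[S] B` of scalars from a local `S`-algebra `X` to its residue
field `k`. -/
noncomputable abbrev reduction : X ⊗[S] B →ₐ[S] ResidueField X ⊗[S] B :=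
  mapScalars B (IsScalarTower.toAlgHom S X (ResidueField X))

theorem reduction_surjective : Function.Surjective (reduction (S := S) X B) :=
  Algebra.TensorProduct.map_surjective _ _ residue_surjective Function.surjective_id

theorem reduction_mapScalars (g : X →ₐ[S] Y) [IsLocalHom g] (y : X ⊗[S] B) :
    reduction Y B (mapScalars B g y) =
      mapScalars B (ResidueField.mapAlgHom g) (reduction X B y) := by
  rw [mapScalars_mapScalars, mapScalars_mapScalars]
  rfl

variable [Module.Free S B]

theorem reduction_mapScalars_eq_one_tmul_iff (g : X →ₐ[S] Y) [IsLocalHom g] {y : X ⊗[S] B}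
    {x : B} : reduction Y B (mapScalars B g y) = 1 ⊗ₜ x ↔ reduction X B y = 1 ⊗ₜ x := by
  rw [reduction_mapScalars, ← mapScalars_one_tmul (ResidueField.mapAlgHom g) x,
    (mapScalars_injective (ResidueField.mapAlgHom g).toRingHom.injective).eq_iff]

theorem mem_jacobson_smul_of_reduction_eq_zero {y : X ⊗[S] B} (hy : reduction X B y = 0) :
    y ∈ (Ideal.jacobson ⊥ : Ideal X) • (⊤ : Submodule X (X ⊗[S] B)) := by
  have h := mem_ker_smul_of_mapScalars_eq_zero hy
  rwa [show RingHom.ker (IsScalarTower.toAlgHom S X (ResidueField X)) = maximalIdeal X from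
    ker_residue, ← jacobson_eq_maximalIdeal ⊥ bot_ne_top] at h

variable [Module.Finite S B]

theorem injOn_reduction : Set.InjOn (reduction (S := S) X B) {e | IsCentralIdem e} :=
  injOn_isCentralIdem_of_ker_le_jacobson (φ := (reduction X B).toRingHom) fun _ hy ↦
    mem_jacobson_smul_of_reduction_eq_zero (X := X) hy

theorem surjOn_reduction (hX : ∀ f : Polynomial X, f.Monic → f.Splits) :
    Set.SurjOn (reduction (S := S) X B) {e | IsCentralIdem e} {e | IsCentralIdem e} :=
  surjOn_isCentralIdem_of_monic_splits hX (φ := (reduction X B).toRingHom) reduction_surjective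
    fun _ hy ↦ mem_jacobson_smul_of_reduction_eq_zero (X := X) hy

end Reduction

section Descent

open IsLocalRing

variable {S T B ι : Type*} [CommRing S] [IsLocalRing S] [CommRing T] [Algebra S T]

theorem algebraMap_surjective_of_surjective_quotient [Module.Finite S T]
    (h : Function.Surjective (algebraMap S (T ⧸ (maximalIdeal S).map (algebraMap S T)))) :
    Function.Surjective (algebraMap S T) := by
  suffices (⊤ : Submodule S T) ≤ LinearMap.range (Algebra.linearMap S T) from
    fun t ↦ this (Submodule.mem_top (x := t))
  refine Submodule.le_of_le_smul_of_le_jacobson_bot Module.Finite.fg_top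
    (jacobson_eq_maximalIdeal ⊥ bot_ne_top).ge fun t _ ↦ ?_
  obtain ⟨s, hs⟩ := h (Ideal.Quotient.mk _ t)
  rw [← add_sub_cancel (algebraMap S T s) t]
  refine Submodule.add_mem_sup ⟨s, rfl⟩ ?_
  rw [Ideal.smul_top_eq_map]
  exact Ideal.Quotient.eq.1 hs.symm

variable [IsLocalRing T] [Ring B] [Algebra S B] [Module.Free S B] [Module.Finite S B]

theorem mapScalars_quotient_eq_one_tmul [IsLocalHom (algebraMap S T)] {e : T ⊗[S] B}
    (he : IsCentralIdem e) {x : B}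
    (hx : IsCentralIdem ((1 : ResidueField S) ⊗ₜ[S] x)) (hex : reduction T B e = 1 ⊗ₜ x) :
    mapScalars B (Ideal.Quotient.mkₐ S ((maximalIdeal S).map (algebraMap S T))) e = 1 ⊗ₜ x := by
  let I := (maximalIdeal S).map (algebraMap S T)
  have : Nontrivial (T ⧸ I) := Ideal.Quotient.nontrivial_iff.2 <|
    ne_top_of_le_ne_top (maximalIdeal.isMaximal T).ne_top <|
      ((local_hom_TFAE (algebraMap S T)).out 0 2 rfl rfl).1 ‹_›
  have : IsLocalRing (T ⧸ I) := .of_surjective' _ Ideal.Quotient.mk_surjective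
  have : IsLocalHom (Ideal.Quotient.mkₐ S I) :=
    ⟨(IsLocalHom.of_surjective (Ideal.Quotient.mk I) Ideal.Quotient.mk_surjective).map_nonunit⟩
  let residueToQuotient : ResidueField S →ₐ[S] T ⧸ I :=
    Ideal.Quotient.liftₐ (maximalIdeal S) (Algebra.ofId S (T ⧸ I)) fun s hs ↦
      Ideal.Quotient.eq_zero_iff_mem.2 (Ideal.mem_map_of_mem _ hs)
  have hx' : IsCentralIdem ((1 : T ⧸ I) ⊗ₜ[S] x) :=
    mapScalars_one_tmul residueToQuotient x ▸ hx.mapScalars residueToQuotient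
  refine injOn_reduction (he.mapScalars _) hx' ?_
  rw [mapScalars_one_tmul]
  exact (reduction_mapScalars_eq_one_tmul_iff (Ideal.Quotient.mkₐ S I)).2 hex

theorem algebraMap_surjective_of_adjoin_repr_eq_top [IsLocalHom (algebraMap S T)]
    [Module.Finite S T] (b : Module.Basis ι S B) {e : T ⊗[S] B} (he : IsCentralIdem e) {x : B}
    (hx : IsCentralIdem ((1 : ResidueField S) ⊗ₜ[S] x)) (hex : reduction T B e = 1 ⊗ₜ x)
    (hadjoin : Algebra.adjoin S (Set.range ((b.baseChange T).repr e)) = ⊤) :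
    Function.Surjective (algebraMap S T) := by
  let π := Ideal.Quotient.mkₐ S ((maximalIdeal S).map (algebraMap S T))
  have hπ : (⊤ : Subalgebra S T).map π ≤ ⊥ := by
    rw [← hadjoin, AlgHom.map_adjoin, Algebra.adjoin_le_iff]
    rintro _ ⟨_, ⟨i, rfl⟩, rfl⟩
    refine ⟨b.repr x i, ?_⟩
    have h := repr_mapScalars b π e i
    rw [mapScalars_quotient_eq_one_tmul he hx hex, Module.Basis.baseChange_repr_tmul,
      Algebra.smul_def, mul_one] at h
    exact h
  refine algebraMap_surjective_of_surjective_quotient fun q ↦ ?_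
  obtain ⟨t, rfl⟩ := Ideal.Quotient.mkₐ_surjective S _ q
  exact hπ ⟨t, trivial, rfl⟩

theorem exists_isCentralIdem_reduction_eq_one_tmul [Algebra.IsIntegral S T] [FaithfulSMul S T]
    {e : T ⊗[S] B} (he : IsCentralIdem e) {x : B}
    (hx : IsCentralIdem ((1 : ResidueField S) ⊗ₜ[S] x)) (hex : reduction T B e = 1 ⊗ₜ x) :
    ∃ e₀ : S ⊗[S] B, IsCentralIdem e₀ ∧ reduction S B e₀ = 1 ⊗ₜ x := by
  let b := Module.Free.chooseBasis S B
  obtain ⟨A, e', rfl, hadjoin⟩ := exists_subalgebra_mapScalars_val_eq b e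
  have : Algebra.IsIntegral S A := .of_injective A.val Subtype.val_injective
  have : FaithfulSMul S A := .tower_bot S A T
  have : Algebra.IsIntegral A T := .tower_top S
  have : IsLocalHom A.val := ⟨(Algebra.IsIntegral.isLocalHom A T).map_nonunit⟩
  have : IsLocalRing A := RingHom.domain_isLocalRing (algebraMap A T)
  have : Module.Finite S A := by
    rw [Module.finite_def, ← Algebra.top_toSubmodule, ← hadjoin]
    exact fg_adjoin_of_finite (Set.finite_range _) fun _ _ ↦ Algebra.IsIntegral.isIntegral _
  have he' : IsCentralIdem e' :=
    .of_map_injective (φ := (mapScalars B A.val).toRingHom)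
      (mapScalars_injective Subtype.val_injective) he
  have he'x : reduction A B e' = 1 ⊗ₜ x := (reduction_mapScalars_eq_one_tmul_iff A.val).1 hex
  have hSA : Function.Surjective (Algebra.ofId S A) :=
    algebraMap_surjective_of_adjoin_repr_eq_top b he' hx he'x hadjoin
  obtain ⟨e₀, rfl⟩ : e' ∈ (mapScalars B (Algebra.ofId S A)).range :=
    (mem_range_mapScalars_iff b).2 fun i ↦ hSA _
  have : IsLocalHom (Algebra.ofId S A) := ⟨(Algebra.IsIntegral.isLocalHom S A).map_nonunit⟩
  exact ⟨e₀, .of_map_injective (φ := (mapScalars B (Algebra.ofId S A)).toRingHom)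
    (mapScalars_injective (FaithfulSMul.algebraMap_injective S A)) he',
    (reduction_mapScalars_eq_one_tmul_iff (Algebra.ofId S A)).1 he'x⟩

end Descent

section Unibranch

open IsLocalRing

section Contraction

variable {S D K L B : Type*} [CommRing D] [Field K] [Algebra D K] [Field L] [Algebra K L]
  [Algebra D L] [IsScalarTower D K L] {V : Subalgebra D L}

theorem isLocalHom_algebraMap_of_contraction [FaithfulSMul D K]
    (hV : ∀ c : K, algebraMap K L c ∈ V → c ∈ (algebraMap D K).range) :
    IsLocalHom (algebraMap D V) := by
  refine ⟨fun d hd ↦ ?_⟩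
  obtain ⟨v, hv⟩ := hd.exists_right_inv
  have hv' : algebraMap K L (algebraMap D K d) * v = 1 := by
    rw [← IsScalarTower.algebraMap_apply]
    exact congrArg Subtype.val hv
  have hv_eq : algebraMap K L (algebraMap D K d)⁻¹ = v := by
    rw [map_inv₀, inv_eq_of_mul_eq_one_right hv']
  obtain ⟨d', hd'⟩ := hV _ (hv_eq ▸ v.2)
  refine .of_mul_eq_one d' (FaithfulSMul.algebraMap_injective D K ?_)
  have hd0 : algebraMap D K d ≠ 0 := fun h0 ↦ by simp [h0] at hv'
  rw [map_mul, hd', mul_inv_cancel₀ hd0, map_one]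

variable [CommRing S] [Algebra S D] [Algebra S K] [Algebra S L]
  [IsScalarTower S D L] [IsScalarTower S K L] [Ring B] [Algebra S B] [Module.Free S B]
  [Module.Finite S B]

theorem mem_range_mapScalars_of_contraction
    (hV : ∀ c : K, algebraMap K L c ∈ V → c ∈ (algebraMap D K).range) {e : V ⊗[S] B}
    (he : mapScalars B (V.val.restrictScalars S) e ∈
      (mapScalars B (IsScalarTower.toAlgHom S K L)).range) :
    e ∈ (mapScalars B (IsScalarTower.toAlgHom S D V)).range := by
  let b := Module.Free.chooseBasis S B
  rw [mem_range_mapScalars_iff b] at he ⊢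
  intro i
  obtain ⟨c, hc⟩ := he i
  rw [repr_mapScalars] at hc
  obtain ⟨d, rfl⟩ := hV c (hc ▸ Subtype.property _)
  exact ⟨d, Subtype.ext ((IsScalarTower.algebraMap_apply D K L d).trans hc)⟩

end Contraction

variable {S D K L B : Type*} [CommRing S] [IsLocalRing S] [Field K] [Algebra S K] [Field L]
  [IsAlgClosed L] [Algebra K L] [Algebra.IsAlgebraic K L] [Algebra S L] [IsScalarTower S K L]
  [Ring B] [Algebra S B] [Module.Free S B] [Module.Finite S B]

theorem surjOn_reduction_of_isIntegrallyClosed [CommRing D] [IsLocalRing D] [IsDomain D]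
    [IsIntegrallyClosed D] [Algebra D K] [IsFractionRing D K] [Algebra D L] [IsScalarTower D K L]
    [Algebra S D] [IsScalarTower S D L] [Algebra.IsIntegral S D] [FaithfulSMul S D]
    (hsplit : ∀ e : L ⊗[S] B, IsCentralIdem e →
      e ∈ (mapScalars B (IsScalarTower.toAlgHom S K L)).range) :
    Set.SurjOn (reduction (S := S) S B) {e | IsCentralIdem e} {e | IsCentralIdem e} := by
  obtain ⟨V, _, _, hV⟩ := exists_isLocalRing_isIntegrallyClosedIn_subalgebra D K L
  have : IsLocalHom (algebraMap D V) := isLocalHom_algebraMap_of_contraction hV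
  let g : D →ₐ[S] V := IsScalarTower.toAlgHom S D V
  have : IsLocalHom g := ⟨IsLocalHom.map_nonunit (f := algebraMap D V)⟩
  have : IsLocalHom (algebraMap S V) :=
    IsScalarTower.algebraMap_eq S D V ▸ RingHom.isLocalHom_comp _ _
  have : IsLocalHom (Algebra.ofId S V) := ⟨IsLocalHom.map_nonunit (f := algebraMap S V)⟩
  have : FaithfulSMul D L := .trans D K L
  have hg : Function.Injective (mapScalars B g) :=
    mapScalars_injective (.of_comp (f := V.val) (FaithfulSMul.algebraMap_injective D L))
  intro x hx
  obtain ⟨y, rfl⟩ := TensorProduct.mk_surjective S B (ResidueField S) residue_surjective x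
  have hy : IsCentralIdem ((1 : ResidueField V) ⊗ₜ[S] y) :=
    mapScalars_one_tmul (ResidueField.mapAlgHom (Algebra.ofId S V)) y ▸ hx.mapScalars _
  obtain ⟨e, he, hey⟩ := surjOn_reduction
    (fun f hf ↦ splits_of_monic_of_isIntegrallyClosedIn (L := L) hf) hy
  obtain ⟨e', rfl⟩ := mem_range_mapScalars_of_contraction hV (hsplit _ (he.mapScalars _))
  have he' : IsCentralIdem e' := .of_map_injective (φ := (mapScalars B g).toRingHom) hg he
  exact exists_isCentralIdem_reduction_eq_one_tmul he' hx
    ((reduction_mapScalars_eq_one_tmul_iff g).1 hey)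

theorem surjOn_reduction_of_isLocalRing_integralClosure [IsDomain S] [IsFractionRing S K]
    [IsLocalRing (integralClosure S K)]
    (hsplit : ∀ e : L ⊗[S] B, IsCentralIdem e →
      e ∈ (mapScalars B (IsScalarTower.toAlgHom S K L)).range) :
    Set.SurjOn (reduction (S := S) S B) {e | IsCentralIdem e} {e | IsCentralIdem e} := by
  have : Algebra.IsAlgebraic S K :=
    (IsFractionRing.comap_isAlgebraic_iff (A := S) (K := K)).2 inferInstance
  have : IsFractionRing (integralClosure S K) K :=
    integralClosure.isFractionRing_of_algebraic (A := S) (L := K)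
      ((injective_iff_map_eq_zero _).1 (IsFractionRing.injective S K))
  have : IsIntegrallyClosed (integralClosure S K) :=
    (isIntegrallyClosed_iff_isIntegrallyClosedIn K).2 inferInstance
  exact surjOn_reduction_of_isIntegrallyClosed (D := integralClosure S K) hsplit

end Unibranch

section BaseRing

variable {R S X Y A : Type*} [CommRing R] [CommRing S] [CommRing X] [CommRing Y] [Algebra R S]
  [Algebra R X] [Algebra S X] [IsScalarTower R S X] [Algebra R Y] [Algebra S Y]
  [IsScalarTower R S Y] [Ring A] [Algebra R A]

variable (R S X A) in
/-- The isomorphism `X ⊗[S] (S ⊗[R] A) ≃ X ⊗[R] A` of `X`-algebras for a not necessarily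
commutative `R`-algebra `A`. -/
noncomputable def cancelBaseChangeAlgEquiv : X ⊗[S] (S ⊗[R] A) ≃ₐ[X] X ⊗[R] A :=
  .symm <| .ofLinearEquiv (AlgebraTensorModule.cancelBaseChange R S X X A).symm
    (by simp [Algebra.TensorProduct.one_def])
    (LinearMap.map_mul_of_map_mul_tmul fun _ _ _ _ ↦ by simp)

theorem cancelBaseChangeAlgEquiv_tmul (x : X) (s : S) (a : A) :
    cancelBaseChangeAlgEquiv R S X A (x ⊗ₜ (s ⊗ₜ a)) = (s • x) ⊗ₜ a :=
  AlgebraTensorModule.cancelBaseChange_tmul R S X x a s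

theorem cancelBaseChangeAlgEquiv_mapScalars (φ : X →ₐ[S] Y) (y : X ⊗[S] (S ⊗[R] A)) :
    cancelBaseChangeAlgEquiv R S Y A (mapScalars (S ⊗[R] A) φ y) =
      mapScalars A (φ.restrictScalars R) (cancelBaseChangeAlgEquiv R S X A y) := by
  induction y with
  | zero => simp only [map_zero]
  | add y z hy hz => simp only [map_add, hy, hz]
  | tmul x w =>
    induction w with
    | zero => simp only [tmul_zero, map_zero]
    | add w w' hw hw' => simp only [tmul_add, map_add, hw, hw']
    | tmul s a =>
      simp only [Algebra.TensorProduct.map_tmul, AlgHom.id_apply, cancelBaseChangeAlgEquiv_tmul,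
        AlgHom.restrictScalars_apply, map_smul]

theorem cancelBaseChangeAlgEquiv_one_tmul (y : S ⊗[R] A) :
    cancelBaseChangeAlgEquiv R S X A (1 ⊗ₜ y) = mapScalars A (IsScalarTower.toAlgHom R S X) y := by
  induction y with
  | zero => simp only [tmul_zero, map_zero]
  | add y z hy hz => simp only [tmul_add, map_add, hy, hz]
  | tmul s a =>
    rw [cancelBaseChangeAlgEquiv_tmul, Algebra.smul_def, mul_one]
    rfl

end BaseRing

section FractionField

theorem isLocalRing_integralClosure_of_isFractionRing {S F K : Type*} [CommRing S] [Field F]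
    [Algebra S F] [IsFractionRing S F] [Field K] [Algebra S K] [IsFractionRing S K]
    [IsLocalRing (integralClosure S F)] : IsLocalRing (integralClosure S K) :=
  (IsLocalization.algEquiv (nonZeroDivisors S) F K).mapIntegralClosure.toRingEquiv.isLocalRing

-- Instance search finds the algebra structure `instAlgebraAtPrimeFractionRing` of `Rₚ` on
-- `FractionRing Rₚ`, which is not definitionally the one coming from `FractionRing` itself.
theorem isFractionRing_atPrime_fractionRing_atPrime {R : Type*} [CommRing R] [IsDomain R]
    (p : Ideal R) [p.IsPrime] :
    IsFractionRing (Localization.AtPrime p) (FractionRing (Localization.AtPrime p)) := by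
  have algebra_eq : instAlgebraAtPrimeFractionRing (Localization.AtPrime p) =
      (OreLocalization.instAlgebra :
        Algebra (Localization.AtPrime p) (FractionRing (Localization.AtPrime p))) := by
    refine Algebra.algebra_ext _ _ (RingHom.congr_fun (IsLocalization.ringHom_ext p.primeCompl ?_))
    ext x
    exact IsLocalization.lift_eq _ x
  rw [algebra_eq]
  exact Localization.isLocalization

theorem isLocalRing_integralClosure_atPrime_fractionRing {R : Type*} [CommRing R] [IsDomain R]
    (p : Ideal R) [p.IsPrime] [IsLocalRing (integralClosure (Localization.AtPrime p)
      (FractionRing (Localization.AtPrime p)))] :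
    IsLocalRing (integralClosure (Localization.AtPrime p) (FractionRing R)) :=
  have := isFractionRing_atPrime_fractionRing_atPrime p
  isLocalRing_integralClosure_of_isFractionRing (F := FractionRing (Localization.AtPrime p))

end FractionField

section Fibers

open IsLocalRing

theorem mem_range_mapScalars_of_numBlocks_eq {R K L A : Type*} [CommRing R] [Field K] [Algebra R K]
    [Field L] [Algebra K L] [Algebra R L] [IsScalarTower R K L] [Ring A] [Algebra R A]
    [Module.Finite R A] (h : numBlocks (K ⊗[R] A) = numBlocks (L ⊗[K] (K ⊗[R] A)))
    {e : L ⊗[R] A} (he : IsCentralIdem e) :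
    e ∈ (mapScalars A (IsScalarTower.toAlgHom R K L)).range := by
  obtain ⟨e', he', rfl⟩ :=
    (bijOn_isCentralIdem (cancelBaseChangeAlgEquiv R K L A).toRingEquiv).surjOn he
  obtain ⟨c, rfl⟩ := exists_eq_one_tmul_of_numBlocks_eq h he'
  exact ⟨c, (cancelBaseChangeAlgEquiv_one_tmul c).symm⟩

variable {R S A : Type*} [CommRing R] [CommRing S] [Algebra R S] [Ring A] [Algebra R A]

theorem bijOn_reduction_of_bijOn_reduction_tensorProduct [IsLocalRing S]
    (h : Set.BijOn (reduction (S := S) S (S ⊗[R] A)) {e | IsCentralIdem e} {e | IsCentralIdem e}) :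
    Set.BijOn (reduction (S := R) S A) {e | IsCentralIdem e} {e | IsCentralIdem e} := by
  let Ψ := (cancelBaseChangeAlgEquiv R S S A).toRingEquiv
  let Ψ' := (cancelBaseChangeAlgEquiv R S (ResidueField S) A).toRingEquiv
  refine ((bijOn_isCentralIdem Ψ').comp (h.comp (bijOn_isCentralIdem Ψ.symm))).congr fun y _ ↦ ?_
  obtain ⟨y, rfl⟩ := Ψ.surjective y
  simp only [Function.comp_apply, RingEquiv.symm_apply_apply]
  exact cancelBaseChangeAlgEquiv_mapScalars _ y

theorem mem_range_mapScalars_tensorProduct {X Y : Type*} [CommRing X] [CommRing Y] [Algebra R X]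
    [Algebra S X] [IsScalarTower R S X] [Algebra R Y] [Algebra S Y] [IsScalarTower R S Y]
    {φ : X →ₐ[S] Y} {y : Y ⊗[S] (S ⊗[R] A)}
    (hy : cancelBaseChangeAlgEquiv R S Y A y ∈ (mapScalars A (φ.restrictScalars R)).range) :
    y ∈ (mapScalars (S ⊗[R] A) φ).range := by
  obtain ⟨x, hx⟩ := hy
  obtain ⟨x, rfl⟩ := (cancelBaseChangeAlgEquiv R S X A).surjective x
  exact ⟨x, (cancelBaseChangeAlgEquiv R S Y A).injective
    ((cancelBaseChangeAlgEquiv_mapScalars φ x).trans hx)⟩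

theorem stmt4_general {K L : Type*} [IsDomain S] [IsLocalRing S] [Field K] [Algebra R K]
    [Algebra S K] [IsScalarTower R S K] [IsFractionRing S K] [IsLocalRing (integralClosure S K)]
    [Field L] [IsAlgClosed L] [Algebra K L] [Algebra.IsAlgebraic K L] [Algebra S L]
    [IsScalarTower S K L] [Algebra R L] [IsScalarTower R K L] [IsScalarTower R S L]
    [Module.Finite R A] [Module.Flat R A]
    (h : numBlocks (K ⊗[R] A) = numBlocks (L ⊗[K] (K ⊗[R] A))) :
    BlockBijective (reduction (S := R) S A) := by
  have : Module.Free S (S ⊗[R] A) := Module.free_of_flat_of_isLocalRing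
  have hsplit (e : L ⊗[S] (S ⊗[R] A)) (he : IsCentralIdem e) :
      e ∈ (mapScalars (S ⊗[R] A) (IsScalarTower.toAlgHom S K L)).range :=
    mem_range_mapScalars_tensorProduct <| mem_range_mapScalars_of_numBlocks_eq h <|
      (bijOn_isCentralIdem (cancelBaseChangeAlgEquiv R S L A).toRingEquiv).mapsTo he
  exact blockBijective_of_bijOn (φ := (reduction (S := R) S A).toRingHom) reduction_surjective <|
    bijOn_reduction_of_bijOn_reduction_tensorProduct
      ⟨fun _ he ↦ he.mapScalars _, injOn_reduction,
        surjOn_reduction_of_isLocalRing_integralClosure hsplit⟩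

end Fibers

/-- **Proposition `unibranched_block_bijective`.** If `R` is a domain, `A` a finite flat
`R`-algebra with block-split generic fiber, and `R_p` is unibranch (its integral closure in its
fraction field is local), then the quotient morphism `A_p → A(p) = A_p/p_pA_p` is block
bijective. Here `A_p = R_p ⊗[R] A` and `A(p) = κ(p) ⊗[R] A` with `κ(p)` the residue field. -/
theorem stmt4 (R : Type u) [CommRing R] [IsDomain R] (A : Type u) [Ring A] [Algebra R A]
    [Module.Finite R A] [Module.Flat R A]
    (hsplit : IsBlockSplit (FractionRing R) (FractionRing R ⊗[R] A))
    (p : PrimeSpectrum R)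
    (huni : IsLocalRing (integralClosure (Localization.AtPrime p.asIdeal)
      (FractionRing (Localization.AtPrime p.asIdeal)))) :
    BlockBijective ⇑(Algebra.TensorProduct.map
      (Ideal.Quotient.mkₐ R (IsLocalRing.maximalIdeal (Localization.AtPrime p.asIdeal)))
      (AlgHom.id R A) :
        Localization.AtPrime p.asIdeal ⊗[R] A →ₐ[R]
          IsLocalRing.ResidueField (Localization.AtPrime p.asIdeal) ⊗[R] A) := by
  have := isLocalRing_integralClosure_atPrime_fractionRing p.asIdeal
  exact stmt4_general (S := Localization.AtPrime p.asIdeal)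
    (hsplit (AlgebraicClosure (FractionRing R)))
end

section
/- Let k be an algebraically closed field, R an integral domain that is a finitely generated k-algebra with fraction field K, and A a finite flat R-algebra. Let X be the set of closed points of Spec(R) with the subspace topology. Then the map X → ℕ, m ↦ #Bl(A(m)), is lower semicontinuous, and X = ⨿_{n∈ℕ} Bl_n^X(A) with Bl_n^X(A) := {m ∈ X : #Bl(A(m)) = n} is a stratification of X. Moreover max_{m∈X} #Bl(A(m)) = #Bl(A ⊗_K K̄), where K̄ is an algebraic closure of K; and if R is universally catenary, then BlEx^X(A) := {m ∈ X : #Bl(A(m)) < #Bl(A ⊗_K K̄)} is either empty or pure of codimension one in X with finitely many irreducible components. -/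
open TensorProduct

noncomputable abbrev resFieldAt (R : Type*) [CommRing R] (p : PrimeSpectrum R) :=
  IsLocalRing.ResidueField (Localization.AtPrime p.asIdeal)

def IsIrredCompOf {X : Type*} [TopologicalSpace X] (C s : Set X) : Prop :=
  IsIrreducible C ∧ C ⊆ s ∧ ∀ C' : Set X, IsIrreducible C' → C' ⊆ s → C ⊆ C' → C' = C

/-- Pure of codimension one (measured in `Spec R`) with finitely many irreducible components. -/
def IsReducedWeilDivisorIn {R : Type*} [CommRing R] (s : Set (PrimeSpectrum R)) : Prop :=
  {C | IsIrredCompOf C s}.Finite ∧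
    ∀ C, IsIrredCompOf C s → ∃ q : PrimeSpectrum R, closure C = closure {q} ∧ Order.height q = 1

def IsCatenaryRing (R : Type u) [CommRing R] : Prop :=
  ∀ c d : LTSeries (PrimeSpectrum R), c.head = d.head → c.last = d.last →
    (∀ i : Fin c.length, c i.castSucc ⋖ c i.succ) →
    (∀ i : Fin d.length, d i.castSucc ⋖ d i.succ) →
    c.length = d.length

def IsUniversallyCatenary (R : Type u) [CommRing R] : Prop :=
  ∀ n : ℕ, IsCatenaryRing (MvPolynomial (Fin n) R)

/-!
Let `L` be an algebraically closed field containing `R` and algebraic over it, and let `T` be the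
integral closure of `R` in `L`. If a prime `Q` of `T` lies over `p` and `k(p)` is algebraically
closed, then `T_Q` is a normal local ring with residue field `k(p)` over which every monic
polynomial splits. Hence central idempotents of `k(p) ⊗ A` lift uniquely to `T_Q ⊗ A`; in other
words, they correspond to the central idempotents `e` of `L ⊗ A` whose denominator ideal
`D(e) = {t ∈ T | t • e comes from T ⊗ A}` is not contained in `Q`. A ring with `n` blocks has
`2 ^ n` central idempotents, so `#Bl(A(p))` is read off from the number of these `e`. Since
`D(e) ⊄ Q` is an open condition on `Q` and `Spec T → Spec R` is a closed surjection, semicontinuity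
follows.

The exceptional locus is the image of the union of the closed sets `V(D(e))`. In a Noetherian normal
domain the minimal primes over the denominator ideal of a fraction have height one. To transfer this
to `T`, which need not be Noetherian, some power `c ^ N` of a coefficient `c` of `e` is separable
over the fraction field of a Noether normalization of `R`, and going-down preserves heights.
-/

section CentralIdempotents

/-- The central idempotents of a ring; each is the sum of a unique set of block idempotents as soon
as there are finitely many of them. -/
def centralIdempotents (B : Type*) [Ring B] : Set B :=
  {e | e ∈ Subring.center B ∧ IsIdempotentElem e}

section Ring

variable {B C : Type*} [Ring B] [Ring C]

lemma commute_of_mem_centralIdempotents {e : B} (he : e ∈ centralIdempotents B) (b : B) :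
    Commute e b :=
  (Subring.mem_center_iff.1 he.1 b).symm

variable (B) in
/-- The central idempotents of `B`, seen in the Boolean algebra of idempotents of its center. -/
def centralIdempotentsEquiv :
    centralIdempotents B ≃ {z : Subring.center B // IsIdempotentElem z} where
  toFun e := ⟨⟨e.1, e.2.1⟩, Subtype.ext e.2.2⟩
  invFun z := ⟨z.1.1, z.1.2, congrArg Subtype.val z.2⟩

lemma IsBlockIdem.mem_centralIdempotents {e : B} (he : IsBlockIdem e) :
    e ∈ centralIdempotents B :=
  ⟨Subring.mem_center_iff.2 fun x => (he.2.2.1 x).symm, he.1⟩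

lemma isBlockIdem_of_isAtom {e : centralIdempotents B}
    (he : IsAtom (centralIdempotentsEquiv B e)) : IsBlockIdem (e : B) := by
  refine ⟨e.2.2, fun h0 => he.1 (Subtype.ext (Subtype.ext h0)),
    commute_of_mem_centralIdempotents e.2, fun f g hf _ hff _ hfg hsum => ?_⟩
  let f' : centralIdempotents B := ⟨f, Subring.mem_center_iff.2 fun x => (hf x).symm, hff⟩
  have hfe : f * (e : B) = f := by rw [← hsum, mul_add, hfg, add_zero, hff.eq]
  have hle : centralIdempotentsEquiv B f' ≤ centralIdempotentsEquiv B e :=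
    Subtype.ext hfe
  rcases he.le_iff.1 hle with h | h
  · exact Or.inl (congrArg (fun z => (z.1 : B)) h)
  · have hf_eq : f = e := congrArg (fun z => (z.1 : B)) h
    exact Or.inr (by simpa [hf_eq] using hsum)

lemma IsBlockIdem.isAtom {e : B} (he : IsBlockIdem e) :
    IsAtom (centralIdempotentsEquiv B ⟨e, he.mem_centralIdempotents⟩) := by
  refine ⟨fun h0 => he.2.1 (congrArg (fun z => (z.1 : B)) h0), fun z hz => ?_⟩
  obtain ⟨⟨f, hf⟩, rfl⟩ := (centralIdempotentsEquiv B).surjective z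
  have hfe : f * e = f := congrArg (fun z : Subring.center B => (z : B)) hz.le
  have hef : e * f = f := by rw [he.2.2.1, hfe]
  have hcomm := commute_of_mem_centralIdempotents hf
  rcases he.2.2.2 f (e - f) hcomm
      (fun x => by rw [sub_mul, mul_sub, he.2.2.1, (hcomm x).eq]) hf.2
      (by rw [IsIdempotentElem, mul_sub, sub_mul, sub_mul, he.1.eq, hfe, hef, hf.2.eq]; simp)
      (by rw [mul_sub, hfe, hf.2.eq, sub_self]) (add_sub_cancel f e) with h | h
  · exact Subtype.ext (Subtype.ext h)
  · exact absurd (Subtype.ext (Subtype.ext (sub_eq_zero.1 h).symm)) hz.ne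

variable (B) in
/-- The blocks of `B` are the atoms of the Boolean algebra of idempotents of its center. -/
def blockIdemEquivAtoms :
    {e : B // IsBlockIdem e} ≃ {z : {z : Subring.center B // IsIdempotentElem z} // IsAtom z} where
  toFun e := ⟨centralIdempotentsEquiv B ⟨e, e.2.mem_centralIdempotents⟩, e.2.isAtom⟩
  invFun z := ⟨(centralIdempotentsEquiv B).symm z.1, isBlockIdem_of_isAtom z.2⟩

lemma ncard_centralIdempotents (hfin : (centralIdempotents B).Finite) :
    (centralIdempotents B).ncard = 2 ^ numBlocks B := by
  classical
  have : Finite (centralIdempotents B) := hfin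
  have := Finite.of_equiv _ (centralIdempotentsEquiv B)
  have := Fintype.ofFinite {z : Subring.center B // IsIdempotentElem z}
  let _ := Fintype.toCompleteAtomicBooleanAlgebra {z : Subring.center B // IsIdempotentElem z}
  let sets := (CompleteAtomicBooleanAlgebra.toSetOfIsAtom
    (α := {z : Subring.center B // IsIdempotentElem z})).toEquiv
  rw [← Nat.card_coe_set_eq, Nat.card_congr ((centralIdempotentsEquiv B).trans sets), numBlocks,
    Nat.card_congr (blockIdemEquivAtoms B), Nat.card_eq_fintype_card, Nat.card_eq_fintype_card,
    Fintype.card_set]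

lemma IsBlockIdem.map_ringEquiv (f : B ≃+* C) {e : B} (he : IsBlockIdem e) :
    IsBlockIdem (f e) := by
  obtain ⟨hidem, hne, hcomm, hprim⟩ := he
  have hsymm {c : C} (hc : ∀ y, c * y = y * c) (x : B) : f.symm c * x = x * f.symm c :=
    f.injective (by simp [hc])
  refine ⟨hidem.map f, by simpa using hne, fun y => ?_, fun c d hc hd hcc hdd hcd hsum => ?_⟩
  · obtain ⟨x, rfl⟩ := f.surjective y
    rw [← map_mul, ← map_mul, hcomm]
  · have := hprim (f.symm c) (f.symm d) (hsymm hc) (hsymm hd) (hcc.map f.symm) (hdd.map f.symm)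
      (by rw [← map_mul, hcd, map_zero]) (by rw [← map_add, hsum, f.symm_apply_apply])
    simpa using this

lemma numBlocks_congr (f : B ≃+* C) : numBlocks B = numBlocks C :=
  Nat.card_congr (f.toEquiv.subtypeEquiv fun e =>
    ⟨fun he => he.map_ringEquiv f, fun he => by simpa using he.map_ringEquiv f.symm⟩)

lemma mem_centralIdempotents_map {f : B →+* C} (hf : Function.Surjective f) {e : B}
    (he : e ∈ centralIdempotents B) : f e ∈ centralIdempotents C := by
  refine ⟨Subring.mem_center_iff.2 fun c => ?_, he.2.map f⟩
  obtain ⟨b, rfl⟩ := hf c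
  rw [← map_mul, ← map_mul, (commute_of_mem_centralIdempotents he b).eq]

lemma mem_centralIdempotents_of_map {f : B →+* C} (hf : Function.Injective f) {e : B}
    (he : f e ∈ centralIdempotents C) : e ∈ centralIdempotents B :=
  ⟨Subring.mem_center_iff.2 fun b => hf (by
    rw [map_mul, map_mul, (commute_of_mem_centralIdempotents he (f b)).eq]),
    hf (by rw [map_mul, he.2.eq])⟩

end Ring

lemma finite_centralIdempotents (F : Type*) [CommRing F] [IsArtinianRing F] (B : Type*) [Ring B]
    [Algebra F B] [Module.Finite F B] : (centralIdempotents B).Finite := by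
  have : IsNoetherian F B := isNoetherian_of_isNoetherianRing_of_finite F B
  have : Module.Finite F (Subalgebra.center F B) :=
    Module.Finite.iff_fg.2 (IsNoetherian.noetherian (Subalgebra.center F B).toSubmodule)
  have : IsArtinianRing (Subalgebra.center F B) := IsArtinianRing.of_finite F _
  have : Finite (TopologicalSpace.Clopens (PrimeSpectrum (Subalgebra.center F B))) :=
    Finite.of_injective _ SetLike.coe_injective
  have : Finite {z : Subalgebra.center F B // IsIdempotentElem z} :=
    Finite.of_equiv _ PrimeSpectrum.isIdempotentElemEquivClopens.toEquiv.symm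
  have : Finite {z : Subring.center B // IsIdempotentElem z} := this
  exact Finite.of_equiv _ (centralIdempotentsEquiv B).symm

end CentralIdempotents

section Lifting

open IsLocalRing Polynomial

lemma splits_of_monic_of_isIntegrallyClosedIn_s6 {O : Type*} (L : Type*) [CommRing O] [Field L]
    [IsAlgClosed L] [Algebra O L] [IsIntegrallyClosedIn O L] {p : O[X]} (hp : p.Monic) :
    p.Splits := by
  have hinj : Function.Injective (algebraMap O L) :=
    IsIntegralClosure.algebraMap_injective O O L
  refine (IsAlgClosed.splits (p.map (algebraMap O L))).of_splits_map_of_injective hinj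
    fun a ha => ?_
  rw [mem_roots (hp.map _).ne_zero, IsRoot, eval_map] at ha
  exact IsIntegralClosure.isIntegral_iff.1 ⟨p, hp, ha⟩

variable {O : Type*} [CommRing O] [IsLocalRing O]

lemma exists_isCoprime_of_splits {p : O[X]} (hp : p.Splits) (hm : p.Monic) :
    ∃ f g : O[X], p = f * g ∧ IsCoprime (X * f) ((X - 1) * g) := by
  classical
  obtain ⟨s, hs⟩ := splits_iff_exists_multiset.1 hp
  let linearProd (t : Multiset O) : O[X] := (t.map (X - C ·)).prod
  have coprime_linearProd (t : Multiset O) (q : O[X]) (h : ∀ a ∈ t, IsCoprime (X - C a) q) :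
      IsCoprime (linearProd t) q :=
    Multiset.prod_induction (IsCoprime · q) _ (fun _ _ => IsCoprime.mul_left) isCoprime_one_left
      (by simpa using h)
  refine ⟨linearProd (s.filter (· ∈ maximalIdeal O)), linearProd (s.filter (· ∉ maximalIdeal O)),
    ?_, ?_⟩
  · rw [hs, hm.leadingCoeff, C_1, one_mul, ← Multiset.prod_add, ← Multiset.map_add,
      Multiset.filter_add_not]
  · have hf := coprime_linearProd (0 ::ₘ s.filter (· ∈ maximalIdeal O))
      (linearProd (1 ::ₘ s.filter (· ∉ maximalIdeal O))) fun a ha =>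
        (coprime_linearProd _ _ fun b hb => ?_).symm
    · simpa [linearProd] using hf
    have ha : a ∈ maximalIdeal O := by
      rcases Multiset.mem_cons.1 ha with rfl | ha
      exacts [zero_mem _, (Multiset.mem_filter.1 ha).2]
    have hb : b ∉ maximalIdeal O := by
      rcases Multiset.mem_cons.1 hb with rfl | hb
      exacts [(Ideal.ne_top_iff_one _).1 (maximalIdeal.isMaximal O).ne_top,
        (Multiset.mem_filter.1 hb).2]
    refine isCoprime_X_sub_C_of_isUnit_sub (notMem_maximalIdeal.1 fun h => hb ?_)
    simpa using add_mem h ha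

lemma eq_zero_of_isIdempotentElem_of_range_le {M : Type*} [AddCommGroup M] [Module O M]
    [Module.Finite O M] {φ : Module.End O M} (hφ : IsIdempotentElem φ)
    (h : LinearMap.range φ ≤ maximalIdeal O • ⊤) : φ = 0 := by
  have hle : LinearMap.range φ ≤ maximalIdeal O • LinearMap.range φ := by
    have := Submodule.map_mono (f := φ) h
    rwa [Submodule.map_smul'', Submodule.map_top, ← LinearMap.range_comp,
      ← Module.End.mul_eq_comp, hφ.eq] at this
  have hfg : (LinearMap.range φ).FG := LinearMap.range_eq_map φ ▸ Module.Finite.fg_top.map φ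
  exact LinearMap.range_eq_bot.1 (Submodule.eq_bot_of_le_smul_of_le_jacobson_bot _ _ hfg hle
    (maximalIdeal_le_jacobson _))

variable {B : Type*} [Ring B] [Algebra O B] [Module.Finite O B]
  {D : Type*} [Ring D] {π : B →+* D}

lemma mul_mul_eq_zero_of_map_eq_zero
    (hker : ∀ b, π b = 0 → b ∈ maximalIdeal O • (⊤ : Submodule O B)) {e f : B}
    (he : IsIdempotentElem e) (hf : IsIdempotentElem f) (h : ∀ b, π (e * b * f) = 0) (b : B) :
    e * b * f = 0 := by
  let φ : Module.End O B := LinearMap.mulRight O f ∘ₗ LinearMap.mulLeft O e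
  have hφ_idem : IsIdempotentElem φ := LinearMap.ext fun b => by
    change e * (e * b * f) * f = e * b * f
    rw [← mul_assoc, ← mul_assoc, he.eq, mul_assoc, hf.eq]
  have hφ_range : LinearMap.range φ ≤ maximalIdeal O • ⊤ := by
    rintro _ ⟨b, rfl⟩
    exact hker _ (h b)
  have hφ : φ = 0 := eq_zero_of_isIdempotentElem_of_range_le hφ_idem hφ_range
  exact LinearMap.congr_fun hφ b

lemma mul_eq_left_of_map_eq (hker : ∀ b, π b = 0 → b ∈ maximalIdeal O • (⊤ : Submodule O B))
    {e f : B} (he : e ∈ centralIdempotents B) (hf : IsIdempotentElem f) (h : π e = π f) :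
    e * f = e := by
  have hzero := mul_mul_eq_zero_of_map_eq_zero hker he.2 hf.one_sub (fun b => by
    rw [(commute_of_mem_centralIdempotents he b).eq, mul_assoc, map_mul, map_mul, h, ← map_mul,
      mul_sub, mul_one, hf.eq, sub_self, map_zero, mul_zero]) 1
  rw [mul_one, mul_sub, mul_one, sub_eq_zero] at hzero
  exact hzero.symm

lemma injOn_centralIdempotents
    (hker : ∀ b, π b = 0 → b ∈ maximalIdeal O • (⊤ : Submodule O B)) :
    Set.InjOn π (centralIdempotents B) := fun e he f hf h => by
  rw [← mul_eq_left_of_map_eq hker he hf.2 h, (commute_of_mem_centralIdempotents he f).eq,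
    mul_eq_left_of_map_eq hker hf he.2 h.symm]

lemma mem_centralIdempotents_of_map_mem
    (hker : ∀ b, π b = 0 → b ∈ maximalIdeal O • (⊤ : Submodule O B)) {e : B}
    (he : IsIdempotentElem e) (hπe : π e ∈ centralIdempotents D) : e ∈ centralIdempotents B := by
  have hcomm (b : B) : π e * π b = π b * π e := commute_of_mem_centralIdempotents hπe (π b)
  refine ⟨Subring.mem_center_iff.2 fun b => ?_, he⟩
  -- Both Peirce components `e B (1 - e)` and `(1 - e) B e` vanish modulo the maximal ideal.
  have hleft : e * b * (1 - e) = 0 := mul_mul_eq_zero_of_map_eq_zero hker he he.one_sub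
    (fun b => by rw [map_mul, map_mul, hcomm, mul_assoc, ← map_mul, mul_sub, he.eq]; simp) b
  have hright : (1 - e) * b * e = 0 := mul_mul_eq_zero_of_map_eq_zero hker he.one_sub he
    (fun b => by
      rw [mul_assoc, map_mul, map_mul, ← hcomm, ← mul_assoc, ← map_mul, sub_mul, he.eq]; simp) b
  rw [mul_sub, mul_one, sub_eq_zero] at hleft
  rw [sub_mul, one_mul, sub_mul, sub_eq_zero] at hright
  rw [hleft, hright]

lemma exists_isIdempotentElem_map_eq (hsplit : ∀ p : O[X], p.Monic → p.Splits) {x : B}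
    (hx : IsIdempotentElem (π x)) : ∃ e : B, IsIdempotentElem e ∧ π e = π x := by
  obtain ⟨p, hp, hpx⟩ := Algebra.IsIntegral.isIntegral (R := O) x
  obtain ⟨f, g, rfl, u, v, huv⟩ := exists_isCoprime_of_splits (hsplit p hp) hp
  refine ⟨aeval x (u * (X * f)), ?_, ?_⟩
  · have hfg : aeval x (f * g) = 0 := hpx
    have hsq : u * (X * f) * (u * (X * f)) = u * (X * f) - u * v * X * (X - 1) * (f * g) := by
      linear_combination (u * (X * f)) * huv
    rw [IsIdempotentElem, ← map_mul, hsq, map_sub, map_mul _ _ (f * g), hfg, mul_zero, sub_zero]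
  · set e := aeval x (u * (X * f)) with he
    have he_mul : e = x * aeval x (u * f) := by
      rw [he, mul_left_comm, map_mul, aeval_X]
    have he_sub : 1 - e = (x - 1) * aeval x (v * g) := by
      have h : 1 - u * (X * f) = (X - 1) * (v * g) := by linear_combination -huv
      simpa [he] using congrArg (aeval x) h
    have hπe : π x * π e = π e := by rw [he_mul, map_mul, ← mul_assoc, hx.eq]
    have hπx : π x * (1 - π e) = 0 := by
      rw [← map_one π, ← map_sub, he_sub, map_mul, map_sub, map_one, ← mul_assoc, mul_sub, hx.eq,
        mul_one, sub_self, zero_mul]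
    rw [← hπe, eq_comm, ← sub_eq_zero, ← hπx, mul_sub, mul_one]

theorem bijOn_centralIdempotents (hsplit : ∀ p : O[X], p.Monic → p.Splits)
    (hπ : Function.Surjective π)
    (hker : ∀ b, π b = 0 → b ∈ maximalIdeal O • (⊤ : Submodule O B)) :
    Set.BijOn π (centralIdempotents B) (centralIdempotents D) := by
  refine ⟨fun e => mem_centralIdempotents_map hπ, injOn_centralIdempotents hker, fun d hd => ?_⟩
  obtain ⟨x, rfl⟩ := hπ d
  obtain ⟨e, he, hex⟩ := exists_isIdempotentElem_map_eq hsplit hd.2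
  exact ⟨e, mem_centralIdempotents_of_map_mem hker he (hex ▸ hd), hex⟩

end Lifting

section IntegralTensors

section Module

variable (R : Type*) [CommRing R] (T : Type*) [CommRing T] [Algebra R T]
  {L : Type*} [CommRing L] [Algebra R L] [Algebra T L] [IsScalarTower R T L]
  {M : Type*} [AddCommGroup M] [Module R M]

variable (L M) in
/-- The elements of `L ⊗ M` that are defined over the intermediate ring `T`: the image of
`T ⊗ M`. -/
noncomputable def integralTensors : Submodule T (L ⊗[R] M) :=
  LinearMap.range (AlgebraTensorModule.rTensor R M (Algebra.linearMap T L))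

variable {T} in
lemma tmul_mem_integralTensors (t : T) (m : M) :
    algebraMap T L t ⊗ₜ[R] m ∈ integralTensors R T L M :=
  ⟨t ⊗ₜ m, rfl⟩

/-- The ideal of denominators `{t ∈ T | t e ∈ T ⊗ M}` of a tensor `e ∈ L ⊗ M`. -/
noncomputable def tensorDenominatorIdeal (e : L ⊗[R] M) : Ideal T :=
  (integralTensors R T L M).colon {e}

variable {R T} in
lemma mem_tensorDenominatorIdeal {e : L ⊗[R] M} {t : T} :
    t ∈ tensorDenominatorIdeal R T e ↔ t • e ∈ integralTensors R T L M :=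
  Submodule.mem_colon_singleton

/-- The ideal of denominators `{t ∈ T | t c ∈ T}` of an element `c` of a `T`-algebra. -/
def denominatorIdeal {L : Type*} [CommRing L] [Algebra T L] (c : L) : Ideal T :=
  (1 : Submodule T L).colon {c}

variable {T} in
lemma mem_denominatorIdeal {L : Type*} [CommRing L] [Algebra T L] {c : L} {t : T} :
    t ∈ denominatorIdeal T c ↔ ∃ a, algebraMap T L a = t • c :=
  Submodule.mem_colon_singleton.trans Submodule.mem_one

section Localization

variable (O : Type*) [CommRing O] [Algebra R O] [Algebra T O] [Algebra O L]
  [IsScalarTower R O L] [IsScalarTower T O L]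

variable {R T O} in
lemma mem_integralTensors_of_smul_mem {e : L ⊗[R] M} {t : T} (ht : IsUnit (algebraMap T O t))
    (he : t • e ∈ integralTensors R T L M) : e ∈ integralTensors R O L M := by
  have hle : integralTensors R T L M ≤ (integralTensors R O L M).restrictScalars T := by
    rintro _ ⟨x, rfl⟩
    induction x with
    | zero => rw [map_zero]; exact zero_mem _
    | add x y hx hy => rw [map_add]; exact add_mem hx hy
    | tmul t m =>
      change algebraMap T L t ⊗ₜ[R] m ∈ integralTensors R O L M
      rw [IsScalarTower.algebraMap_apply T O L]
      exact tmul_mem_integralTensors R _ m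
  have hte : algebraMap T O t • e ∈ integralTensors R O L M := by
    rw [algebraMap_smul]
    exact hle he
  exact (Submodule.smul_mem_iff_of_isUnit _ ht).1 hte

lemma exists_smul_mem_integralTensors (S : Submonoid T) [IsLocalization S O] {e : L ⊗[R] M}
    (he : e ∈ integralTensors R O L M) : ∃ t ∈ S, t • e ∈ integralTensors R T L M := by
  obtain ⟨x, rfl⟩ := he
  induction x with
  | zero => exact ⟨1, S.one_mem, by rw [map_zero, smul_zero]; exact zero_mem _⟩
  | add x y hx hy =>
    obtain ⟨t, ht, hx⟩ := hx
    obtain ⟨u, hu, hy⟩ := hy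
    refine ⟨t * u, S.mul_mem ht hu, ?_⟩
    rw [map_add, smul_add, mul_smul, mul_smul, smul_comm t u]
    exact add_mem (Submodule.smul_mem _ u hx) (Submodule.smul_mem _ t hy)
  | tmul o m =>
    obtain ⟨⟨a, s⟩, h⟩ := IsLocalization.surj S o
    refine ⟨s, s.2, ?_⟩
    have hsmul : (s : T) • algebraMap O L o = algebraMap T L a := by
      rw [Algebra.smul_def, IsScalarTower.algebraMap_apply T O L,
        IsScalarTower.algebraMap_apply T O L, ← map_mul, mul_comm, h]
    change (s : T) • algebraMap O L o ⊗ₜ[R] m ∈ _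
    rw [smul_tmul', hsmul]
    exact tmul_mem_integralTensors R a m

theorem mem_integralTensors_atPrime_iff (Q : Ideal T) [Q.IsPrime] [IsLocalization.AtPrime O Q]
    {e : L ⊗[R] M} :
    e ∈ integralTensors R O L M ↔ ¬ tensorDenominatorIdeal R T e ≤ Q := by
  rw [SetLike.not_le_iff_exists]
  refine ⟨fun he => ?_, fun ⟨t, ht, htQ⟩ => mem_integralTensors_of_smul_mem
    (IsLocalization.map_units O (⟨t, htQ⟩ : Q.primeCompl)) (mem_tensorDenominatorIdeal.1 ht)⟩
  obtain ⟨t, htQ, ht⟩ := exists_smul_mem_integralTensors R T O Q.primeCompl he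
  exact ⟨t, mem_tensorDenominatorIdeal.2 ht, htQ⟩

end Localization

variable (L M) in
lemma exists_coordinates [Module.Finite R M] [Module.Projective R M] :
    ∃ (n : ℕ) (c : Fin n → L ⊗[R] M →ₗ[L] L), ∀ e : L ⊗[R] M,
      e ∈ integralTensors R T L M ↔ ∀ i, c i e ∈ (1 : Submodule T L) := by
  obtain ⟨n, f, g, -, -, hfg⟩ := Module.Finite.exists_comp_eq_id_of_projective R M
  let φ (i : Fin n) : M →ₗ[R] R := LinearMap.proj i ∘ₗ g
  let c (i : Fin n) : L ⊗[R] M →ₗ[L] L :=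
    (AlgebraTensorModule.rid R L L).toLinearMap ∘ₗ (φ i).baseChange L
  let m (i : Fin n) : M := f fun j => if i = j then 1 else 0
  have dual_basis (x : M) : x = ∑ i, φ i x • m i := by
    conv_lhs => rw [← LinearMap.id_apply (R := R) x, ← hfg, LinearMap.comp_apply]
    rw [LinearMap.pi_apply_eq_sum_univ f (g x)]
    rfl
  have expand (e : L ⊗[R] M) : e = ∑ i, c i e ⊗ₜ[R] m i := by
    induction e with
    | zero => simp
    | add x y hx hy => simp only [map_add, add_tmul, Finset.sum_add_distrib, ← hx, ← hy]
    | tmul l x =>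
      conv_lhs => rw [dual_basis x]
      simp [c, tmul_sum, smul_tmul]
  refine ⟨n, c, fun e => ⟨?_, fun h => ?_⟩⟩
  · rintro ⟨x, rfl⟩ i
    induction x with
    | zero => simp
    | add x y hx hy => rw [map_add, map_add]; exact add_mem hx hy
    | tmul t x =>
      refine Submodule.mem_one.2 ⟨φ i x • t, ?_⟩
      simp [c, Algebra.smul_def, ← IsScalarTower.algebraMap_apply]
  · rw [expand e]
    refine sum_mem fun i _ => ?_
    obtain ⟨t, ht⟩ := Submodule.mem_one.1 (h i)
    rw [← ht]
    exact tmul_mem_integralTensors R t (m i)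

lemma exists_tensorDenominatorIdeal_eq_iInf [Module.Finite R M] [Module.Projective R M]
    (e : L ⊗[R] M) :
    ∃ (n : ℕ) (c : Fin n → L), tensorDenominatorIdeal R T e = ⨅ i, denominatorIdeal T (c i) := by
  obtain ⟨n, c, hc⟩ := exists_coordinates R T L M
  refine ⟨n, fun i => c i e, Ideal.ext fun t => ?_⟩
  rw [mem_tensorDenominatorIdeal, hc, Submodule.mem_iInf]
  refine forall_congr' fun i => ?_
  rw [← algebraMap_smul L t e, map_smul, algebraMap_smul]
  exact Submodule.mem_colon_singleton.symm

end Module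

section Algebra

variable {R : Type*} [CommRing R] {A : Type*} [Ring A] [Algebra R A]

lemma mem_maximalIdeal_smul_top_of_map_eq_zero {O κ : Type*} [CommRing O] [IsLocalRing O]
    [Algebra R O] [CommRing κ] [Nontrivial κ] [Algebra R κ] {ψ : O →ₐ[R] κ}
    (hψ : Function.Surjective ψ) {b : O ⊗[R] A}
    (hb : Algebra.TensorProduct.map ψ (AlgHom.id R A) b = 0) :
    b ∈ IsLocalRing.maximalIdeal O • (⊤ : Submodule O (O ⊗[R] A)) := by
  obtain ⟨c, rfl⟩ := (rTensor_exact A ψ.toLinearMap.exact_subtype_ker_map hψ b).1 hb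
  clear hb
  induction c with
  | zero => simp
  | add x y hx hy => rw [map_add]; exact add_mem hx hy
  | tmul z a =>
    have hz : (z : O) ∈ IsLocalRing.maximalIdeal O :=
      IsLocalRing.le_maximalIdeal (RingHom.ker_ne_top ψ.toRingHom) z.2
    have hsmul : (LinearMap.ker ψ.toLinearMap).subtype.rTensor A (z ⊗ₜ a) =
        (z : O) • ((1 : O) ⊗ₜ[R] a) := by simp [smul_tmul']
    rw [hsmul]
    exact Submodule.smul_mem_smul hz Submodule.mem_top

lemma mem_center_of_commute_one_tmul {S : Type*} [CommRing S] [Algebra R S] {x : S ⊗[R] A}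
    (h : ∀ a : A, Commute x (1 ⊗ₜ a)) : x ∈ Subring.center (S ⊗[R] A) := by
  refine Subring.mem_center_iff.2 fun y => ?_
  induction y with
  | zero => simp
  | add a b ha hb => rw [mul_add, add_mul, ha, hb]
  | tmul s a =>
    have hsmul : s ⊗ₜ[R] a = s • ((1 : S) ⊗ₜ[R] a) := by simp [smul_tmul']
    rw [hsmul, mul_smul_comm, smul_mul_assoc, (h a).eq]

lemma map_id_mem_centralIdempotents {S S' : Type*} [CommRing S] [Algebra R S] [CommRing S']
    [Algebra R S'] (f : S →ₐ[R] S') {e : S ⊗[R] A} (he : e ∈ centralIdempotents (S ⊗[R] A)) :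
    Algebra.TensorProduct.map f (AlgHom.id R A) e ∈ centralIdempotents (S' ⊗[R] A) := by
  refine ⟨mem_center_of_commute_one_tmul fun a => ?_, he.2.map _⟩
  simpa using (commute_of_mem_centralIdempotents he (1 ⊗ₜ a)).map
    (Algebra.TensorProduct.map f (AlgHom.id R A))

lemma bijOn_centralIdempotents_integralTensors [Module.Flat R A] {O L : Type*} [CommRing O]
    [Algebra R O] [CommRing L] [Algebra O L] [FaithfulSMul O L] [Algebra R L]
    [IsScalarTower R O L] :
    Set.BijOn (Algebra.TensorProduct.map (IsScalarTower.toAlgHom R O L) (AlgHom.id R A))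
      (centralIdempotents (O ⊗[R] A))
      (centralIdempotents (L ⊗[R] A) ∩ integralTensors R O L A) := by
  have hinj : Function.Injective
      (Algebra.TensorProduct.map (IsScalarTower.toAlgHom R O L) (AlgHom.id R A)) :=
    Module.Flat.rTensor_preserves_injective_linearMap (IsScalarTower.toAlgHom R O L).toLinearMap
      (FaithfulSMul.algebraMap_injective O L)
  refine ⟨fun e he => ⟨map_id_mem_centralIdempotents _ he, e, rfl⟩, hinj.injOn, ?_⟩
  rintro _ ⟨he, b, rfl⟩
  exact ⟨b, mem_centralIdempotents_of_map (f := (Algebra.TensorProduct.map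
    (IsScalarTower.toAlgHom R O L) (AlgHom.id R A)).toRingHom) hinj he, rfl⟩

theorem ncard_centralIdempotents_tensor_eq [Module.Finite R A] [Module.Flat R A]
    {O L κ : Type*} [CommRing O] [IsLocalRing O] [Algebra R O] [Field L] [IsAlgClosed L]
    [Algebra O L] [IsIntegrallyClosedIn O L] [Algebra R L] [IsScalarTower R O L] [CommRing κ]
    [Nontrivial κ] [Algebra R κ] (ψ : O →ₐ[R] κ) (hψ : Function.Surjective ψ) :
    (centralIdempotents (κ ⊗[R] A)).ncard =
      (centralIdempotents (L ⊗[R] A) ∩ integralTensors R O L A).ncard := by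
  have : FaithfulSMul O L := (faithfulSMul_iff_algebraMap_injective O L).2
    (IsIntegralClosure.algebraMap_injective O O L)
  have hred := bijOn_centralIdempotents (O := O)
    (π := (Algebra.TensorProduct.map ψ (AlgHom.id R A)).toRingHom)
    (fun _ => splits_of_monic_of_isIntegrallyClosedIn_s6 L)
    (TensorProduct.map_surjective hψ Function.surjective_id)
    (fun _ => mem_maximalIdeal_smul_top_of_map_eq_zero hψ)
  have hgen := bijOn_centralIdempotents_integralTensors (R := R) (A := A) (O := O) (L := L)
  rw [← hred.image_eq, hred.injOn.ncard_image, ← hgen.image_eq,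
    hgen.injOn.ncard_image]

end Algebra

end IntegralTensors

section Height

variable {R S : Type*} [CommRing R] [CommRing S] [Algebra R S]

lemma height_le_height_under [Algebra.IsIntegral R S] (q : Ideal S) [q.IsPrime] :
    q.height ≤ (q.under R).height := by
  have hmono : StrictMono (PrimeSpectrum.comap (algebraMap R S)) := fun _ _ h =>
    Ideal.IsIntegral.comap_lt_comap h
  have := Order.height_le_height_apply_of_strictMono _ hmono ⟨q, ‹_›⟩
  rwa [← PrimeSpectrum.height_eq_orderHeight, ← PrimeSpectrum.height_eq_orderHeight] at this

lemma height_under_le_height [Algebra.HasGoingDown R S] (q : Ideal S) [q.IsPrime] :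
    (q.under R).height ≤ q.height := by
  let x : PrimeSpectrum S := ⟨q, ‹_›⟩
  change (x.comap (algebraMap R S)).asIdeal.height ≤ x.asIdeal.height
  rw [PrimeSpectrum.height_eq_orderHeight, PrimeSpectrum.height_eq_orderHeight,
    Order.height_le_iff']
  intro l hl
  have : q.LiesOver l.last.asIdeal := ⟨by rw [hl]; rfl⟩
  obtain ⟨l', hlen, hlast, -⟩ := Ideal.exists_ltSeries_of_hasGoingDown l q
  rw [← hlen]
  exact Order.length_le_height hlast.le

variable (P : Type*) [CommRing P] [Algebra P R] [Algebra P S] [IsScalarTower P R S]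

lemma height_under_eq_height [Algebra.IsIntegral P R] [Algebra.IsIntegral R S]
    [Algebra.HasGoingDown P S] (q : Ideal S) [q.IsPrime] : (q.under R).height = q.height := by
  have := Ideal.IsPrime.under R q
  refine le_antisymm ?_ (height_le_height_under q)
  calc (q.under R).height ≤ ((q.under R).under P).height := height_le_height_under _
    _ = (q.under P).height := by rw [Ideal.under_under]
    _ ≤ q.height := height_under_le_height q

end Height

section Purity

section Noetherian

variable {S E : Type*} [CommRing S] [CommRing E] [Algebra S E]

lemma denominatorIdeal_ne_bot [Nontrivial S] [IsFractionRing S E] (c : E) :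
    denominatorIdeal S c ≠ ⊥ := by
  obtain ⟨⟨a, b⟩, hab⟩ := IsLocalization.surj (nonZeroDivisors S) c
  refine (Submodule.ne_bot_iff _).2 ⟨b, mem_denominatorIdeal.2 ⟨a, ?_⟩, nonZeroDivisors.ne_zero b.2⟩
  rw [Algebra.smul_def, mul_comm, hab]

lemma exists_eq_denominatorIdeal_of_mem_minimalPrimes [IsNoetherianRing S] {c : E} {q : Ideal S}
    (hq : q ∈ (denominatorIdeal S c).minimalPrimes) : ∃ t : S, q = denominatorIdeal S (t • c) := by
  have hcolon : (denominatorIdeal S c).colon {(1 : S)} = denominatorIdeal S c := by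
    ext s; simp [Submodule.mem_colon_singleton]
  rw [← hcolon] at hq
  obtain ⟨t, rfl⟩ := Submodule.exists_eq_colon_of_mem_minimalPrimes hq
  refine ⟨t, Ideal.ext fun s => ?_⟩
  rw [Submodule.mem_colon_singleton, mem_denominatorIdeal, mem_denominatorIdeal, smul_eq_mul,
    mul_smul]

-- Otherwise `y` would stabilise the finitely generated module `denominatorIdeal S y`, hence be
-- integral over `S`.
lemma exists_mem_exists_notMem_smul_eq [IsNoetherianRing S] [IsDomain E]
    [IsIntegrallyClosedIn S E] {y : E} (hbot : denominatorIdeal S y ≠ ⊥)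
    (hprime : (denominatorIdeal S y).IsPrime) :
    ∃ u ∈ denominatorIdeal S y, ∃ w ∉ denominatorIdeal S y, u • y = algebraMap S E w := by
  by_contra! hcon
  set q := denominatorIdeal S y
  have hinj : Function.Injective (Algebra.linearMap S E) :=
    IsIntegralClosure.algebraMap_injective S S E
  have hint : IsIntegral S y := by
    refine isIntegral_of_smul_mem_submodule (M := E) (Submodule.map (Algebra.linearMap S E) q)
      (fun h => hbot (Submodule.map_injective_of_injective hinj
        (h.trans (Submodule.map_bot _).symm)))
      ((IsNoetherian.noetherian q).map _) y ?_
    rintro _ ⟨s, hs, rfl⟩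
    obtain ⟨a, ha⟩ := mem_denominatorIdeal.1 hs
    refine ⟨a, by_contra fun haq => hcon s hs a haq ha.symm, ?_⟩
    rw [Algebra.linearMap_apply, ha, Algebra.smul_def, smul_eq_mul, mul_comm,
      Algebra.linearMap_apply]
  obtain ⟨a, ha⟩ := IsIntegrallyClosedIn.isIntegral_iff.1 hint
  exact hprime.ne_top ((Ideal.eq_top_iff_one _).2
    (mem_denominatorIdeal.2 ⟨a, by rw [ha, one_smul]⟩))

lemma height_denominatorIdeal_le_one [IsNoetherianRing S] [FaithfulSMul S E] {y : E}
    (hprime : (denominatorIdeal S y).IsPrime) {u w : S} (hu : u ∈ denominatorIdeal S y)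
    (hw : w ∉ denominatorIdeal S y) (huw : u • y = algebraMap S E w) :
    (denominatorIdeal S y).height ≤ 1 := by
  refine Ideal.height_le_one_of_isPrincipal_of_mem_minimalPrimes (Ideal.span {u}) _
    ⟨⟨hprime, (Ideal.span_singleton_le_iff_mem _).2 hu⟩, fun p ⟨hp, hup⟩ hle s hs => ?_⟩
  obtain ⟨a, ha⟩ := mem_denominatorIdeal.1 hs
  have hsw : s * w = a * u := FaithfulSMul.algebraMap_injective S E (by
    rw [map_mul, map_mul, ← huw, ha, Algebra.smul_def, Algebra.smul_def]; ring)
  have hmem : s * w ∈ p := hsw ▸ p.mul_mem_left a ((Ideal.span_singleton_le_iff_mem _).1 hup)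
  exact (hp.mem_or_mem hmem).resolve_right fun h => hw (hle h)

theorem exists_height_eq_one_and_pole_of_denominatorIdeal_le {S E : Type*} [CommRing S]
    [IsDomain S] [IsNoetherianRing S] [IsIntegrallyClosed S] [Field E] [Algebra S E]
    [IsFractionRing S E] {c : E} {Q : Ideal S} [Q.IsPrime] (hQ : denominatorIdeal S c ≤ Q) :
    ∃ q : Ideal S, q.IsPrime ∧ q ≤ Q ∧ q.height = 1 ∧
      ∃ u ∈ q, ∃ w ∉ q, u • c = algebraMap S E w := by
  have : IsIntegrallyClosedIn S E := (isIntegrallyClosed_iff_isIntegrallyClosedIn E).1 ‹_›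
  obtain ⟨q, hq, hqQ⟩ := Ideal.exists_minimalPrimes_le hQ
  have hprime := hq.isPrime
  obtain ⟨t, rfl⟩ := exists_eq_denominatorIdeal_of_mem_minimalPrimes hq
  have hbot := denominatorIdeal_ne_bot (S := S) (t • c)
  obtain ⟨u, hu, w, hw, huw⟩ := exists_mem_exists_notMem_smul_eq hbot hprime
  refine ⟨_, hprime, hqQ, le_antisymm (height_denominatorIdeal_le_one hprime hu hw huw) ?_,
    u * t, Ideal.mul_mem_right t _ hu, w, hw, by rw [mul_smul, huw]⟩
  exact Order.one_le_iff_ne_zero.2 fun h => hbot (Ideal.height_eq_zero_iff_eq_bot.1 h)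

end Noetherian

section Pow

variable {T L : Type*} [CommRing T] [CommRing L] [Algebra T L]

lemma denominatorIdeal_le_of_smul_pow_eq [FaithfulSMul T L] {c : L} {q : Ideal T} [q.IsPrime]
    {u w : T} (hu : u ∈ q) (hw : w ∉ q) {N : ℕ} (huw : u • c ^ N = algebraMap T L w) :
    denominatorIdeal T c ≤ q := fun s hs => by
  obtain ⟨a, ha⟩ := mem_denominatorIdeal.1 hs
  have hsw : s ^ N * w = a ^ N * u := FaithfulSMul.algebraMap_injective T L (by
    rw [map_mul, map_mul, map_pow, map_pow, ← huw, ha, Algebra.smul_def, Algebra.smul_def]; ring)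
  have hmem : s ^ N * w ∈ q := hsw ▸ q.mul_mem_left _ hu
  exact Ideal.IsPrime.mem_of_pow_mem ‹_› _
    ((Ideal.IsPrime.mem_or_mem ‹_› hmem).resolve_right hw)

lemma denominatorIdeal_pow_le [IsIntegrallyClosedIn T L] (c : L) {N : ℕ} (hN : N ≠ 0) :
    denominatorIdeal T (c ^ N) ≤ denominatorIdeal T c := fun s hs => by
  obtain ⟨a, ha⟩ := mem_denominatorIdeal.1 hs
  refine mem_denominatorIdeal.2 (IsIntegrallyClosedIn.exists_algebraMap_eq_of_isIntegral_pow
    (Nat.pos_of_ne_zero hN) ?_)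
  have hpow : (s • c) ^ N = algebraMap T L (s ^ (N - 1) * a) := by
    rw [map_mul, ha, smul_pow, ← Algebra.smul_def, smul_smul, pow_sub_one_mul hN]
  exact hpow ▸ isIntegral_algebraMap

end Pow

lemma exists_height_eq_one_of_denominatorIdeal_le_of_pow {S E T L : Type*} [CommRing S]
    [IsDomain S] [IsNoetherianRing S] [IsIntegrallyClosed S] [Field E] [Algebra S E]
    [IsFractionRing S E] [CommRing T] [IsDomain T] [CommRing L] [Algebra T L] [FaithfulSMul T L]
    [IsIntegrallyClosedIn T L] [Algebra S T] [Algebra.IsIntegral S T] [FaithfulSMul S T]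
    [Algebra S L] [Algebra E L] [IsScalarTower S T L] [IsScalarTower S E L] {c : L} {d : E}
    {N : ℕ} (hN : N ≠ 0) (hd : algebraMap E L d = c ^ N) {Q : Ideal T} [Q.IsPrime]
    (hQ : denominatorIdeal T c ≤ Q) :
    ∃ q : Ideal T, q.IsPrime ∧ q ≤ Q ∧ denominatorIdeal T c ≤ q ∧ q.height = 1 := by
  have smul_eq {s a : S} (h : s • d = algebraMap S E a) :
      algebraMap S T s • c ^ N = algebraMap T L (algebraMap S T a) := by
    rw [← IsScalarTower.algebraMap_apply, IsScalarTower.algebraMap_apply S E L, ← h,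
      Algebra.smul_def, Algebra.smul_def, map_mul, hd, ← IsScalarTower.algebraMap_apply,
      ← IsScalarTower.algebraMap_apply]
  have hQS : denominatorIdeal S d ≤ Q.under S := fun s hs => by
    obtain ⟨a, ha⟩ := mem_denominatorIdeal.1 hs
    exact hQ (denominatorIdeal_pow_le c hN (mem_denominatorIdeal.2 ⟨_, (smul_eq ha.symm).symm⟩))
  obtain ⟨q', hq', hq'Q, hheight, u, hu, w, hw, huw⟩ :=
    exists_height_eq_one_and_pole_of_denominatorIdeal_le hQS
  obtain ⟨q, hqQ, hq, hover⟩ := Ideal.exists_ideal_le_liesOver_of_le (p := q') Q hq'Q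
  obtain rfl : q' = q.under S := hover.over
  exact ⟨q, hq, hqQ, denominatorIdeal_le_of_smul_pow_eq hu hw (smul_eq huw),
    hheight ▸ (height_under_eq_height S q).symm⟩

lemma exists_isSeparable_pow (F : Type*) {L : Type*} [Field F] [Field L] [Algebra F L]
    [Algebra.IsAlgebraic F L] (c : L) : ∃ N ≠ 0, IsSeparable F (c ^ N) := by
  let p := ringExpChar (separableClosure F L)
  obtain ⟨n, d, hd⟩ := (isPurelyInseparable_iff_pow_mem (separableClosure F L) p).1 inferInstance c
  exact ⟨p ^ n, pow_ne_zero _ (expChar_pos (separableClosure F L) p).ne',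
    hd ▸ mem_separableClosure_iff.1 d.2⟩

theorem exists_height_eq_one_of_denominatorIdeal_le (P F : Type*) {T L : Type*} [CommRing P]
    [IsDomain P] [IsNoetherianRing P] [IsIntegrallyClosed P] [Field F] [Algebra P F]
    [IsFractionRing P F] [Field L] [Algebra F L] [Algebra P L] [IsScalarTower P F L]
    [Algebra.IsAlgebraic F L] [CommRing T] [IsDomain T] [Algebra P T] [Algebra T L]
    [IsScalarTower P T L] [IsIntegralClosure T P L] {c : L} {Q : Ideal T} [Q.IsPrime]
    (hQ : denominatorIdeal T c ≤ Q) :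
    ∃ q : Ideal T, q.IsPrime ∧ q ≤ Q ∧ denominatorIdeal T c ≤ q ∧ q.height = 1 := by
  obtain ⟨N, hN, hsep⟩ := exists_isSeparable_pow F c
  let E := IntermediateField.adjoin F {c ^ N}
  have : FiniteDimensional F E := IntermediateField.adjoin.finiteDimensional hsep.isIntegral
  have : Algebra.IsSeparable F E :=
    (IntermediateField.isSeparable_adjoin_simple_iff_isSeparable F L).2 hsep
  let S := integralClosure P E
  have : IsNoetherianRing S := IsIntegralClosure.isNoetherianRing P F E S
  have : IsIntegrallyClosed S := integralClosure.isIntegrallyClosedOfFiniteExtension F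
  have : IsFractionRing S E := integralClosure.isFractionRing_of_finite_extension F E
  have : IsScalarTower P E L := IsScalarTower.to₁₃₄ P F E L
  let : Algebra S T := (IsIntegralClosure.lift P T L : S →ₐ[P] T).toAlgebra
  have : IsScalarTower S T L :=
    .of_algebraMap_eq fun s => (IsIntegralClosure.algebraMap_lift P T L s).symm
  have : IsScalarTower P S T :=
    .of_algebraMap_eq fun x => ((IsIntegralClosure.lift P T L : S →ₐ[P] T).commutes x).symm
  have : Algebra.IsIntegral P T := IsIntegralClosure.isIntegral_algebra P L
  have : Algebra.IsIntegral S T := Algebra.IsIntegral.tower_top P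
  have : FaithfulSMul T L := (faithfulSMul_iff_algebraMap_injective T L).2
    (IsIntegralClosure.algebraMap_injective T P L)
  have : IsIntegrallyClosedIn T L := .of_isIntegralClosure P
  have : FaithfulSMul S L := FaithfulSMul.trans S E L
  have : FaithfulSMul S T := FaithfulSMul.tower_bot S T L
  exact exists_height_eq_one_of_denominatorIdeal_le_of_pow (S := S)
    (d := IntermediateField.AdjoinSimple.gen F (c ^ N)) hN rfl hQ

lemma isIntegralClosure_of_isIntegral (P R : Type*) {T L : Type*} [CommRing P] [CommRing R]
    [CommRing T] [CommRing L] [Algebra P R] [Algebra.IsIntegral P R] [Algebra R L] [Algebra P L]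
    [IsScalarTower P R L] [Algebra T L] [IsIntegralClosure T R L] : IsIntegralClosure T P L where
  algebraMap_injective := IsIntegralClosure.algebraMap_injective T R L
  isIntegral_iff {x} := by
    rw [← IsIntegralClosure.isIntegral_iff (A := T) (R := R)]
    exact ⟨fun h => h.tower_top, isIntegral_trans x⟩

lemma exists_height_under_eq_one_of_denominatorIdeal_le (k : Type*) [Field k]
    {R T L : Type*} [CommRing R] [IsDomain R] [Algebra k R] [Algebra.FiniteType k R] [Field L]
    [Algebra R L] [FaithfulSMul R L] [Algebra.IsAlgebraic R L] [CommRing T] [IsDomain T]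
    [Algebra R T] [Algebra T L] [IsScalarTower R T L] [IsIntegralClosure T R L] {c : L}
    {Q : Ideal T} [Q.IsPrime] (hQ : denominatorIdeal T c ≤ Q) :
    ∃ q : Ideal T, q.IsPrime ∧ q ≤ Q ∧ denominatorIdeal T c ≤ q ∧ (q.under R).height = 1 := by
  obtain ⟨s, g, hg, hint⟩ := exists_integral_inj_algHom_of_fg k R
  let P := MvPolynomial (Fin s) k
  let : Algebra P R := g.toAlgebra
  let : Algebra P T := Algebra.compHom T (algebraMap P R)
  let : Algebra P L := Algebra.compHom L (algebraMap P R)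
  have : IsScalarTower P R T := .of_algebraMap_eq fun _ => rfl
  have : IsScalarTower P R L := .of_algebraMap_eq fun _ => rfl
  have : IsScalarTower P T L := IsScalarTower.to₁₃₄ P R T L
  have : Algebra.IsIntegral P R := ⟨hint⟩
  have : FaithfulSMul P R := (faithfulSMul_iff_algebraMap_injective P R).2 hg
  have : FaithfulSMul P L := FaithfulSMul.trans P R L
  have : FaithfulSMul P T := FaithfulSMul.tower_bot P T L
  have : IsIntegralClosure T P L := isIntegralClosure_of_isIntegral P R
  have : Algebra.IsIntegral P T := IsIntegralClosure.isIntegral_algebra P L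
  have : Algebra.IsIntegral R T := IsIntegralClosure.isIntegral_algebra R L
  let : Algebra (FractionRing P) L := FractionRing.liftAlgebra P L
  have : IsScalarTower P (FractionRing P) L := FractionRing.isScalarTower_liftAlgebra P L
  have : Algebra.IsAlgebraic (FractionRing P) L :=
    (IsFractionRing.comap_isAlgebraic_iff (A := P)).1 (Algebra.IsAlgebraic.trans P R L)
  obtain ⟨q, hq, hqQ, hcq, hheight⟩ :=
    exists_height_eq_one_of_denominatorIdeal_le P (FractionRing P) hQ
  exact ⟨q, hq, hqQ, hcq, (height_under_eq_height P q).trans hheight⟩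

theorem exists_height_under_eq_one_of_tensorDenominatorIdeal_le (k : Type*) [Field k]
    {R T L M : Type*} [CommRing R] [IsDomain R] [Algebra k R] [Algebra.FiniteType k R] [Field L]
    [Algebra R L] [FaithfulSMul R L] [Algebra.IsAlgebraic R L] [CommRing T] [IsDomain T]
    [Algebra R T] [Algebra T L] [IsScalarTower R T L] [IsIntegralClosure T R L] [AddCommGroup M]
    [Module R M] [Module.Finite R M] [Module.Projective R M] {e : L ⊗[R] M} {Q : Ideal T}
    [Q.IsPrime] (hQ : tensorDenominatorIdeal R T e ≤ Q) :
    ∃ q : Ideal T, q.IsPrime ∧ q ≤ Q ∧ tensorDenominatorIdeal R T e ≤ q ∧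
      (q.under R).height = 1 := by
  obtain ⟨n, c, hc⟩ := exists_tensorDenominatorIdeal_eq_iInf R T e
  rw [hc] at hQ ⊢
  obtain ⟨i, -, hi⟩ := (Ideal.IsPrime.inf_le' ‹_›).1 ((Finset.inf_univ_eq_iInf _).trans_le hQ)
  obtain ⟨q, hq, hqQ, hcq, hheight⟩ :=
    exists_height_under_eq_one_of_denominatorIdeal_le k (R := R) hi
  exact ⟨q, hq, hqQ, (iInf_le _ i).trans hcq, hheight⟩

end Purity

section Fibres

lemma exists_algHom_residueField_surjective {R T O : Type*} [CommRing R] [CommRing T]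
    [Algebra R T] [Algebra.IsIntegral R T] (p : Ideal R) [p.IsPrime] [IsAlgClosed p.ResidueField]
    (Q : Ideal T) [Q.IsPrime] [Q.LiesOver p] [CommRing O] [Algebra R O] [Algebra T O]
    [IsScalarTower R T O] [IsLocalization.AtPrime O Q] :
    ∃ ψ : O →ₐ[R] p.ResidueField, Function.Surjective ψ := by
  let := Localization.AtPrime.algebraOfLiesOver p Q
  have hbij : Function.Bijective (IsScalarTower.toAlgHom R p.ResidueField Q.ResidueField) :=
    IsAlgClosed.algebraMap_bijective_of_isIntegral
  let resQ : Localization.AtPrime Q →ₐ[R] Q.ResidueField := IsScalarTower.toAlgHom R _ _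
  let toLoc : O ≃ₐ[R] Localization.AtPrime Q :=
    (IsLocalization.algEquiv Q.primeCompl O (Localization.AtPrime Q)).restrictScalars R
  refine ⟨((AlgEquiv.ofBijective _ hbij).symm.toAlgHom.comp resQ).comp toLoc.toAlgHom, ?_⟩
  exact ((AlgEquiv.ofBijective _ hbij).symm.surjective.comp IsLocalRing.residue_surjective).comp
    toLoc.surjective

theorem two_pow_numBlocks_residueField_tensor {R T L A : Type*} [CommRing R] [CommRing T]
    [IsDomain T] [IsIntegrallyClosed T] [Algebra R T] [Algebra.IsIntegral R T] [Field L]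
    [IsAlgClosed L] [Algebra R L] [Algebra T L] [IsScalarTower R T L] [IsFractionRing T L]
    [Ring A] [Algebra R A] [Module.Finite R A] [Module.Flat R A] (p : Ideal R) [p.IsPrime]
    [IsAlgClosed p.ResidueField] (Q : Ideal T) [Q.IsPrime] [Q.LiesOver p] :
    2 ^ numBlocks (p.ResidueField ⊗[R] A) =
      {e ∈ centralIdempotents (L ⊗[R] A) | ¬ tensorDenominatorIdeal R T e ≤ Q}.ncard := by
  have hle := Q.primeCompl_le_nonZeroDivisors
  let O := Localization.subalgebra.ofField L Q.primeCompl hle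
  have : IsLocalization.AtPrime O Q := Localization.subalgebra.isLocalization_ofField L _ hle
  have : IsLocalRing O := IsLocalization.AtPrime.isLocalRing O Q
  have : IsIntegrallyClosedIn O L := (isIntegrallyClosed_iff_isIntegrallyClosedIn L).1
    (isIntegrallyClosed_of_isLocalization O Q.primeCompl hle)
  obtain ⟨ψ, hψ⟩ := exists_algHom_residueField_surjective (O := O) p Q
  rw [← ncard_centralIdempotents (finite_centralIdempotents p.ResidueField _),
    ncard_centralIdempotents_tensor_eq (L := L) ψ hψ]
  congr 1
  ext e
  exact and_congr_right fun _ => mem_integralTensors_atPrime_iff R T O Q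

lemma isAlgClosed_residueField_of_isMaximal (k : Type*) [Field k] [IsAlgClosed k] {R : Type*}
    [CommRing R] [Algebra k R] [Algebra.FiniteType k R] (p : Ideal R) [p.IsMaximal] :
    IsAlgClosed p.ResidueField := by
  let : Field (R ⧸ p) := Ideal.Quotient.field p
  have : Module.Finite k (R ⧸ p) := finite_of_finite_type_of_isJacobsonRing k (R ⧸ p)
  have hk : Function.Surjective (algebraMap k (R ⧸ p)) :=
    IsAlgClosed.algebraMap_bijective_of_isIntegral.surjective
  have hκ : Function.Surjective
      ((algebraMap (R ⧸ p) p.ResidueField).comp (algebraMap k (R ⧸ p))) :=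
    p.bijective_algebraMap_quotient_residueField.surjective.comp hk
  refine ⟨fun f => ?_⟩
  obtain ⟨g, rfl⟩ := Polynomial.map_surjective _ hκ f
  exact (IsAlgClosed.splits g).map _

lemma isAlgClosed_residueField_of_isClosed (k : Type*) [Field k] [IsAlgClosed k] {R : Type*}
    [CommRing R] [Algebra k R] [Algebra.FiniteType k R] {p : PrimeSpectrum R}
    (hp : IsClosed {p}) : IsAlgClosed p.asIdeal.ResidueField :=
  have := (PrimeSpectrum.isClosed_singleton_iff_isMaximal p).1 hp
  isAlgClosed_residueField_of_isMaximal k p.asIdeal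

end Fibres

section Semicontinuity

variable {X Y γ : Type*} [TopologicalSpace X] [TopologicalSpace Y] [LinearOrder γ]

lemma lowerSemicontinuous_ncard_of_isOpen {ι : Type*} {S : Set ι} (hS : S.Finite)
    {U : ι → Set X} (hU : ∀ i, IsOpen (U i)) :
    LowerSemicontinuous fun x => {i ∈ S | x ∈ U i}.ncard := by
  intro x n hn
  have hnhds : ⋂ i ∈ {i ∈ S | x ∈ U i}, U i ∈ nhds x :=
    (Filter.biInter_mem (hS.subset (Set.sep_subset _ _))).2 fun i hi => (hU i).mem_nhds hi.2
  filter_upwards [hnhds] with y hy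
  rw [Set.mem_iInter₂] at hy
  exact hn.trans_le (Set.ncard_le_ncard (fun i hi => ⟨hi.1, hy i hi⟩)
    (hS.subset (Set.sep_subset _ _)))

lemma lowerSemicontinuousOn_of_isClosedMap {δ : Type*} [LinearOrder δ] {π : X → Y}
    (hclosed : IsClosedMap π) (hsurj : Function.Surjective π) {g : Y → γ} {h : X → δ}
    (hh : LowerSemicontinuous h) {φ : γ → δ} (hφ : StrictMono φ) {s : Set Y}
    (hgh : ∀ x, π x ∈ s → φ (g (π x)) = h x) : LowerSemicontinuousOn g s := by
  refine lowerSemicontinuousOn_iff_preimage_Iic.2 fun b =>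
    ⟨π '' (h ⁻¹' Set.Iic (φ b)), hclosed _ (hh.isClosed_preimage _), ?_⟩
  ext y
  refine and_congr_right fun hy => ⟨fun hb => ?_, ?_⟩
  · obtain ⟨x, rfl⟩ := hsurj y
    exact ⟨x, (hgh x hy).symm.trans_le (hφ.monotone hb), rfl⟩
  · rintro ⟨x, hx, rfl⟩
    exact hφ.le_iff_le.1 ((hgh x hy).trans_le hx)

lemma closure_inter_subset_of_lowerSemicontinuousOn {f : X → γ} {s : Set X}
    (hf : LowerSemicontinuousOn f s) (b : γ) :
    closure {x | x ∈ s ∧ f x = b} ∩ s ⊆ {x | x ∈ s ∧ f x ≤ b} := by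
  obtain ⟨Z, hZ, hZs⟩ := lowerSemicontinuousOn_iff_preimage_Iic.1 hf b
  rintro x ⟨hx, hxs⟩
  have hsub : {x | x ∈ s ∧ f x = b} ⊆ Z := fun y hy => (hZs.subset ⟨hy.1, hy.2.le⟩).2
  exact hZs.superset ⟨hxs, closure_minimal hsub hZ hx⟩

lemma exists_isClosed_isOpen_of_lowerSemicontinuousOn {f : X → ℕ} {s : Set X}
    (hf : LowerSemicontinuousOn f s) (n : ℕ) :
    ∃ Z U : Set X, IsClosed Z ∧ IsOpen U ∧ {x | x ∈ s ∧ f x = n} = Z ∩ U ∩ s := by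
  obtain ⟨Z, hZ, hZs⟩ := lowerSemicontinuousOn_iff_preimage_Iic.1 hf n
  obtain ⟨U, hU, hUs⟩ : ∃ U, IsOpen U ∧ ∀ x ∈ s, n ≤ f x ↔ x ∈ U := by
    cases n with
    | zero => exact ⟨Set.univ, isOpen_univ, by simp⟩
    | succ m =>
      obtain ⟨U, hU, hUs⟩ := lowerSemicontinuousOn_iff_preimage_Ioi.1 hf m
      exact ⟨U, hU, fun x hx =>
        ⟨fun h => (hUs.subset ⟨hx, h⟩).2, fun h => (hUs.superset ⟨hx, h⟩).2⟩⟩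
  refine ⟨Z, U, hZ, hU, Set.ext fun x => ⟨?_, ?_⟩⟩
  · rintro ⟨hx, hfx⟩
    exact ⟨⟨(hZs.subset ⟨hx, hfx.le⟩).2, (hUs x hx).1 hfx.ge⟩, hx⟩
  · rintro ⟨⟨hxZ, hxU⟩, hx⟩
    exact ⟨hx, le_antisymm (hZs.superset ⟨hx, hxZ⟩).2 ((hUs x hx).2 hxU)⟩

end Semicontinuity

section ClosedPoints

variable {X : Type*} [TopologicalSpace X] [JacobsonSpace X]

lemma isIrreducible_inter_closedPoints {C : Set X} (hC : IsIrreducible C) (hclosed : IsClosed C) :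
    IsIrreducible (C ∩ closedPoints X) := by
  rwa [← isIrreducible_iff_closure, closure_inter_closedPoints hclosed]

lemma finite_setOf_isIrredCompOf_inter_closedPoints [TopologicalSpace.NoetherianSpace X]
    {Z : Set X} (hZ : IsClosed Z) : {C | IsIrredCompOf C (Z ∩ closedPoints X)}.Finite := by
  obtain ⟨S, hS, hclosed, hirr, rfl⟩ :=
    TopologicalSpace.NoetherianSpace.exists_finite_set_isClosed_irreducible hZ
  refine (hS.image (· ∩ closedPoints X)).subset ?_
  rintro C ⟨hC, hCZ, hmax⟩
  lift S to Finset (Set X) using hS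
  obtain ⟨t, ht, hCt⟩ := isIrreducible_iff_sUnion_isClosed.1 hC S hclosed (fun x hx => (hCZ hx).1)
  exact ⟨t, ht, hmax _ (isIrreducible_inter_closedPoints (hirr t ht) (hclosed t ht))
    (Set.inter_subset_inter_left _ (Set.subset_sUnion_of_mem ht))
    fun x hx => ⟨hCt hx, (hCZ hx).2⟩⟩

theorem isReducedWeilDivisorIn_inter_closedPoints {R : Type*} [CommRing R] [IsNoetherianRing R]
    [JacobsonSpace (PrimeSpectrum R)] {Z : Set (PrimeSpectrum R)} (hZ : IsClosed Z)
    (hpure : ∀ p ∈ Z, ∃ q ∈ Z, q ≤ p ∧ Order.height q = 1) :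
    IsReducedWeilDivisorIn (Z ∩ closedPoints (PrimeSpectrum R)) := by
  refine ⟨finite_setOf_isIrredCompOf_inter_closedPoints hZ, ?_⟩
  rintro C ⟨hC, hCZ, hmax⟩
  obtain ⟨p, hp⟩ := QuasiSober.sober hC.closure isClosed_closure
  have hpZ : p ∈ Z := closure_minimal (fun x hx => (hCZ hx).1) hZ hp.mem
  obtain ⟨q, hqZ, hqp, hheight⟩ := hpure p hpZ
  have hCq : C ⊆ closure {q} := subset_closure.trans (hp.def.symm.subset.trans
    ((PrimeSpectrum.le_iff_specializes q p).1 hqp).closure_subset)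
  have hC_eq : closure {q} ∩ closedPoints (PrimeSpectrum R) = C :=
    hmax _ (isIrreducible_inter_closedPoints isIrreducible_singleton.closure isClosed_closure)
      (Set.inter_subset_inter_left _ (closure_minimal (Set.singleton_subset_iff.2 hqZ) hZ))
      fun x hx => ⟨hCq hx, (hCZ hx).2⟩
  exact ⟨q, by rw [← hC_eq, closure_inter_closedPoints isClosed_closure], hheight⟩

lemma exists_isClosed_singleton_notMem {R : Type*} [CommRing R] [IsDomain R]
    [JacobsonSpace (PrimeSpectrum R)] {Z : Set (PrimeSpectrum R)} (hZ : IsClosed Z)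
    (hpure : ∀ p ∈ Z, ∃ q ∈ Z, q ≤ p ∧ Order.height q = 1) :
    ∃ m : PrimeSpectrum R, IsClosed {m} ∧ m ∉ Z := by
  have hbot : ⊥ ∉ Z := fun hbot => by
    obtain ⟨q, -, hq, hheight⟩ := hpure ⊥ hbot
    rw [le_bot_iff.1 hq, Order.height_bot] at hheight
    exact zero_ne_one hheight
  obtain ⟨m, hmZ, hm⟩ := nonempty_inter_closedPoints ⟨⊥, hbot⟩ hZ.isOpen_compl.isLocallyClosed
  exact ⟨m, hm, hmZ⟩

end ClosedPoints

section BlockLocus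

lemma ncard_sep_lt_ncard_iff {ι : Type*} {S : Set ι} (hS : S.Finite) {P : ι → Prop} :
    {i ∈ S | P i}.ncard < S.ncard ↔ ∃ i ∈ S, ¬ P i := by
  refine ⟨fun h => ?_, fun ⟨i, hi, hPi⟩ => ?_⟩
  · by_contra! hall
    rw [Set.sep_eq_self_iff_mem_true.2 hall] at h
    exact h.false
  · exact Set.ncard_lt_ncard ((Set.sep_subset _ _).ssubset_of_mem_notMem hi fun h => hPi h.2) hS

lemma comap_algebraMap_surjective_of_isIntegral {R T : Type*} [CommRing R] [CommRing T]
    [Algebra R T] [Algebra.IsIntegral R T] [FaithfulSMul R T] :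
    Function.Surjective (PrimeSpectrum.comap (algebraMap R T)) := by
  intro p
  obtain ⟨Q, hQ, hover⟩ := Ideal.nonempty_primesOver (S := T) p.asIdeal
  exact ⟨⟨Q, hQ⟩, PrimeSpectrum.ext hover.over.symm⟩

/-- The locus in `Spec R` over which some central idempotent of `L ⊗ A` acquires a denominator.
Here `T` stands for the integral closure of `R` in an algebraically closed field `L`. -/
def blockExceptionalLocus (R T L A : Type*) [CommRing R] [CommRing T] [Algebra R T] [CommRing L]
    [Algebra R L] [Algebra T L] [IsScalarTower R T L] [Ring A] [Algebra R A] :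
    Set (PrimeSpectrum R) :=
  PrimeSpectrum.comap (algebraMap R T) ''
    ⋃ e ∈ centralIdempotents (L ⊗[R] A), PrimeSpectrum.zeroLocus (tensorDenominatorIdeal R T e)

variable {R T L A : Type*} [CommRing R] [CommRing T] [Algebra R T] [Field L] [Algebra R L]
  [Algebra T L] [IsScalarTower R T L] [Ring A] [Algebra R A]

lemma mem_blockExceptionalLocus {p : PrimeSpectrum R} :
    p ∈ blockExceptionalLocus R T L A ↔ ∃ Q : PrimeSpectrum T, Q.comap (algebraMap R T) = p ∧
      ∃ e ∈ centralIdempotents (L ⊗[R] A), tensorDenominatorIdeal R T e ≤ Q.asIdeal := by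
  simp [blockExceptionalLocus, PrimeSpectrum.mem_zeroLocus, and_comm]

variable [Module.Finite R A]

lemma exists_mem_blockExceptionalLocus_height_eq_one (k : Type*) [Field k] [IsDomain R]
    [Algebra k R] [Algebra.FiniteType k R] [FaithfulSMul R L] [Algebra.IsAlgebraic R L]
    [IsDomain T] [IsIntegralClosure T R L] [Module.Projective R A] {p : PrimeSpectrum R}
    (hp : p ∈ blockExceptionalLocus R T L A) :
    ∃ q ∈ blockExceptionalLocus R T L A, q ≤ p ∧ Order.height q = 1 := by
  obtain ⟨Q, rfl, e, he, heQ⟩ := mem_blockExceptionalLocus.1 hp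
  obtain ⟨q, hq, hqQ, heq, hheight⟩ :=
    exists_height_under_eq_one_of_tensorDenominatorIdeal_le k heQ
  refine ⟨PrimeSpectrum.comap (algebraMap R T) ⟨q, hq⟩,
    mem_blockExceptionalLocus.2 ⟨_, rfl, e, he, heq⟩, Ideal.comap_mono hqQ, ?_⟩
  rwa [← PrimeSpectrum.height_eq_orderHeight]

variable [Algebra.IsIntegral R T]

lemma isClosed_blockExceptionalLocus : IsClosed (blockExceptionalLocus R T L A) :=
  PrimeSpectrum.isClosedMap_comap_of_isIntegral _ (algebraMap_isIntegral_iff.2 inferInstance) _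
    ((finite_centralIdempotents L _).isClosed_biUnion fun _ _ => PrimeSpectrum.isClosed_zeroLocus _)

section Count

variable (R T L A) [IsDomain T] [IsIntegrallyClosed T] [FaithfulSMul R T] [IsAlgClosed L]
  [IsFractionRing T L] [Module.Flat R A]

include T L in
theorem lowerSemicontinuousOn_numBlocks :
    LowerSemicontinuousOn
      (fun p : PrimeSpectrum R => numBlocks (p.asIdeal.ResidueField ⊗[R] A))
      {p | IsAlgClosed p.asIdeal.ResidueField} := by
  refine lowerSemicontinuousOn_of_isClosedMap
    (PrimeSpectrum.isClosedMap_comap_of_isIntegral (algebraMap R T)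
      (algebraMap_isIntegral_iff.2 inferInstance))
    comap_algebraMap_surjective_of_isIntegral
    (lowerSemicontinuous_ncard_of_isOpen (finite_centralIdempotents L (L ⊗[R] A))
      fun e => (PrimeSpectrum.isClosed_zeroLocus (tensorDenominatorIdeal R T e)).isOpen_compl)
    (pow_right_strictMono₀ one_lt_two) fun Q hQ => ?_
  have : IsAlgClosed (Q.comap (algebraMap R T)).asIdeal.ResidueField := hQ
  have : Q.asIdeal.LiesOver (Q.comap (algebraMap R T)).asIdeal := ⟨rfl⟩
  exact two_pow_numBlocks_residueField_tensor _ Q.asIdeal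

variable (p : PrimeSpectrum R) [IsAlgClosed p.asIdeal.ResidueField]

include T in
lemma numBlocks_residueField_tensor_le :
    numBlocks (p.asIdeal.ResidueField ⊗[R] A) ≤ numBlocks (L ⊗[R] A) := by
  obtain ⟨Q, hQ, hover⟩ := Ideal.nonempty_primesOver (S := T) p.asIdeal
  rw [← Nat.pow_le_pow_iff_right one_lt_two,
    two_pow_numBlocks_residueField_tensor (T := T) (L := L) p.asIdeal Q,
    ← ncard_centralIdempotents (finite_centralIdempotents L _)]
  exact Set.ncard_le_ncard (Set.sep_subset _ _) (finite_centralIdempotents L _)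

theorem numBlocks_residueField_tensor_lt_iff :
    numBlocks (p.asIdeal.ResidueField ⊗[R] A) < numBlocks (L ⊗[R] A) ↔
      p ∈ blockExceptionalLocus R T L A := by
  have hfin := finite_centralIdempotents L (L ⊗[R] A)
  have hlt (Q : Ideal T) [Q.IsPrime] [Q.LiesOver p.asIdeal] :
      numBlocks (p.asIdeal.ResidueField ⊗[R] A) < numBlocks (L ⊗[R] A) ↔
        ∃ e ∈ centralIdempotents (L ⊗[R] A), tensorDenominatorIdeal R T e ≤ Q := by
    rw [← Nat.pow_lt_pow_iff_right one_lt_two, two_pow_numBlocks_residueField_tensor (L := L) _ Q,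
      ← ncard_centralIdempotents hfin, ncard_sep_lt_ncard_iff hfin]
    simp only [not_not]
  rw [mem_blockExceptionalLocus]
  constructor
  · intro h
    obtain ⟨Q, hQ, hover⟩ := Ideal.nonempty_primesOver (S := T) p.asIdeal
    exact ⟨⟨Q, hQ⟩, PrimeSpectrum.ext hover.over.symm, (hlt Q).1 h⟩
  · rintro ⟨Q, rfl, h⟩
    have : Q.asIdeal.LiesOver (Q.comap (algebraMap R T)).asIdeal := ⟨rfl⟩
    exact (hlt Q.asIdeal).2 h

end Count

end BlockLocus

lemma numBlocks_baseChange_baseChange (R K L A : Type*) [CommRing R] [CommRing K] [Algebra R K]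
    [CommRing L] [Algebra R L] [Algebra K L] [IsScalarTower R K L] [Ring A] [Algebra R A] :
    numBlocks (L ⊗[K] (K ⊗[R] A)) = numBlocks (L ⊗[R] A) :=
  (numBlocks_congr (Algebra.TensorProduct.algEquivOfLinearEquivTensorProduct
    (TensorProduct.AlgebraTensorModule.cancelBaseChange R K L L A).symm
    (fun _ _ _ _ => by
      simp only [TensorProduct.AlgebraTensorModule.cancelBaseChange_symm_tmul,
        Algebra.TensorProduct.tmul_mul_tmul, mul_one]) rfl).toRingEquiv).symm

section ClosedFibres

variable (R L : Type*) [CommRing R] [Field L] [Algebra R L] [FaithfulSMul R L]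

instance faithfulSMul_integralClosure : FaithfulSMul R (integralClosure R L) :=
  FaithfulSMul.tower_bot R _ L

variable [Algebra.IsAlgebraic R L]

instance isFractionRing_integralClosure : IsFractionRing (integralClosure R L) L :=
  integralClosure.isFractionRing_of_algebraic
    ((injective_iff_map_eq_zero _).1 (FaithfulSMul.algebraMap_injective R L))

instance isIntegrallyClosed_integralClosure : IsIntegrallyClosed (integralClosure R L) :=
  (isIntegrallyClosed_iff_isIntegrallyClosedIn L).2 inferInstance

variable (k A : Type*) [Field k] [IsAlgClosed k] [Algebra k R] [Algebra.FiniteType k R]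
  [IsAlgClosed L] [Ring A] [Algebra R A] [Module.Finite R A] [Module.Flat R A]

include k L in
theorem lowerSemicontinuousOn_numBlocks_closedPoints :
    LowerSemicontinuousOn (fun p : PrimeSpectrum R => numBlocks (p.asIdeal.ResidueField ⊗[R] A))
      (closedPoints (PrimeSpectrum R)) :=
  (lowerSemicontinuousOn_numBlocks R (integralClosure R L) L A).mono fun _ hm =>
    isAlgClosed_residueField_of_isClosed k hm

include k in
theorem exists_isClosed_forall_numBlocks_lt_iff_mem [IsDomain R] :
    ∃ Z : Set (PrimeSpectrum R), IsClosed Z ∧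
      (∀ p ∈ Z, ∃ q ∈ Z, q ≤ p ∧ Order.height q = 1) ∧
      ∀ m ∈ closedPoints (PrimeSpectrum R),
        numBlocks (m.asIdeal.ResidueField ⊗[R] A) ≤ numBlocks (L ⊗[R] A) ∧
        (numBlocks (m.asIdeal.ResidueField ⊗[R] A) < numBlocks (L ⊗[R] A) ↔ m ∈ Z) := by
  have : IsNoetherianRing R := Algebra.FiniteType.isNoetherianRing k R
  have : Module.FinitePresentation R A := Module.finitePresentation_of_finite R A
  have : Module.Projective R A := Module.Flat.projective_of_finitePresentation
  refine ⟨blockExceptionalLocus R (integralClosure R L) L A, isClosed_blockExceptionalLocus,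
    fun p hp => exists_mem_blockExceptionalLocus_height_eq_one k hp, fun m hm => ?_⟩
  have : IsAlgClosed m.asIdeal.ResidueField := isAlgClosed_residueField_of_isClosed k hm
  exact ⟨numBlocks_residueField_tensor_le R (integralClosure R L) L A m,
    numBlocks_residueField_tensor_lt_iff R (integralClosure R L) L A m⟩

end ClosedFibres

/-- **Corollary `finite_type_alg_closed_setting`.** -/
theorem stmt6 (k : Type u) [Field k] [IsAlgClosed k]
    (R : Type u) [CommRing R] [IsDomain R] [Algebra k R] [Algebra.FiniteType k R]
    (A : Type u) [Ring A] [Algebra R A] [Module.Finite R A] [Module.Flat R A] :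
    LowerSemicontinuousOn (fun p : PrimeSpectrum R => numBlocks (resFieldAt R p ⊗[R] A))
      {m : PrimeSpectrum R | IsClosed ({m} : Set (PrimeSpectrum R))} ∧
    (∀ n : ℕ,
      (∃ (Z U : Set (PrimeSpectrum R)), IsClosed Z ∧ IsOpen U ∧
        {m : PrimeSpectrum R | IsClosed ({m} : Set (PrimeSpectrum R)) ∧
          numBlocks (resFieldAt R m ⊗[R] A) = n} =
        Z ∩ U ∩ {m : PrimeSpectrum R | IsClosed ({m} : Set (PrimeSpectrum R))}) ∧
      closure {m : PrimeSpectrum R | IsClosed ({m} : Set (PrimeSpectrum R)) ∧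
          numBlocks (resFieldAt R m ⊗[R] A) = n} ∩
        {m : PrimeSpectrum R | IsClosed ({m} : Set (PrimeSpectrum R))} ⊆
      {m : PrimeSpectrum R | IsClosed ({m} : Set (PrimeSpectrum R)) ∧
          numBlocks (resFieldAt R m ⊗[R] A) ≤ n}) ∧
    (∀ m : PrimeSpectrum R, IsClosed ({m} : Set (PrimeSpectrum R)) →
      numBlocks (resFieldAt R m ⊗[R] A) ≤
        numBlocks (AlgebraicClosure (FractionRing R) ⊗[FractionRing R] (FractionRing R ⊗[R] A))) ∧
    (∃ m : PrimeSpectrum R, IsClosed ({m} : Set (PrimeSpectrum R)) ∧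
      numBlocks (resFieldAt R m ⊗[R] A) =
        numBlocks (AlgebraicClosure (FractionRing R) ⊗[FractionRing R] (FractionRing R ⊗[R] A))) ∧
    (IsUniversallyCatenary R →
      ({m : PrimeSpectrum R | IsClosed ({m} : Set (PrimeSpectrum R)) ∧
          numBlocks (resFieldAt R m ⊗[R] A) <
            numBlocks (AlgebraicClosure (FractionRing R) ⊗[FractionRing R]
              (FractionRing R ⊗[R] A))} = ∅ ∨
        IsReducedWeilDivisorIn {m : PrimeSpectrum R | IsClosed ({m} : Set (PrimeSpectrum R)) ∧
          numBlocks (resFieldAt R m ⊗[R] A) <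
            numBlocks (AlgebraicClosure (FractionRing R) ⊗[FractionRing R]
              (FractionRing R ⊗[R] A))})) := by
  let L := AlgebraicClosure (FractionRing R)
  have : Algebra.IsAlgebraic R L :=
    (IsFractionRing.comap_isAlgebraic_iff (A := R) (K := FractionRing R)).2 inferInstance
  have : FaithfulSMul R L := FaithfulSMul.trans R (FractionRing R) L
  have : IsNoetherianRing R := Algebra.FiniteType.isNoetherianRing k R
  have : JacobsonSpace (PrimeSpectrum R) :=
    PrimeSpectrum.isJacobsonRing_iff_jacobsonSpace.1 (isJacobsonRing_of_finiteType (A := k))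
  have hlsc := lowerSemicontinuousOn_numBlocks_closedPoints R L k A
  obtain ⟨Z, hZ, hpure, hcount⟩ := exists_isClosed_forall_numBlocks_lt_iff_mem R L k A
  rw [numBlocks_baseChange_baseChange]
  refine ⟨hlsc, fun n => ⟨exists_isClosed_isOpen_of_lowerSemicontinuousOn hlsc n,
    closure_inter_subset_of_lowerSemicontinuousOn hlsc n⟩, fun m hm => (hcount m hm).1, ?_,
    fun _ => Or.inr ?_⟩
  · obtain ⟨m, hm, hmZ⟩ := exists_isClosed_singleton_notMem hZ hpure
    exact ⟨m, hm, (hcount m hm).1.eq_of_not_lt fun h => hmZ ((hcount m hm).2.1 h)⟩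
  · convert isReducedWeilDivisorIn_inter_closedPoints hZ hpure using 1
    ext m
    exact ⟨fun h => ⟨(hcount m h.1).2.1 h.2, h.1⟩, fun h => ⟨h.2, (hcount m h.2).2.2 h.1⟩⟩
end
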